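/- Let p_1,…,p_m ∈ ℕ with each p_i ≥ 2 and Σ_{i=1}^m 1/p_i < m−1. Then the normalised first Betti number of a uniformly random index n subgroup of Γ_{p_1,…,p_m} converges in probability to m−1−Σ_{i=1}^m 1/p_i: for every ε > 0, ℙ[ | b_1(H_n)/n − (m−1−Σ_{i=1}^m 1/p_i) | < ε ] → 1 as n → ∞, where b_1(H) := dim_ℚ( Ab(H) ⊗_ℤ ℚ ) is the first Betti number of the group H, Ab(H) denoting its abelianization. -/

import Mathlib

open Filter Topology Asymptotics
open scoped TensorProduct

/-- the relations `x_i ^ p_i = x_j ^ p_j` defining `Γ_{p_1,…,p_m}` -/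
def torusRels (m : ℕ) (p : Fin m → ℕ) : Set (FreeGroup (Fin m)) :=
  {w : FreeGroup (Fin m) | ∃ i j : Fin m, w = FreeGroup.of i ^ p i * (FreeGroup.of j ^ p j)⁻¹}

/-- the group `Γ_{p_1,…,p_m} = ⟨x_1,…,x_m ∣ x_1^{p_1} = ⋯ = x_m^{p_m}⟩` -/
abbrev TorusKnotGroup (m : ℕ) (p : Fin m → ℕ) : Type :=
  PresentedGroup (torusRels m p)

/-- the probability that a uniformly random index `n` subgroup of `G` satisfies `P` -/
noncomputable def subgroupProb (G : Type*) [Group G] (n : ℕ) (P : Subgroup G → Prop) : ℝ :=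
  (Nat.card {H : Subgroup G // H.index = n ∧ P H} : ℝ) /
    (Nat.card {H : Subgroup G // H.index = n} : ℝ)

/-- the first Betti number `b_1(H) = dim_ℚ (Ab(H) ⊗_ℤ ℚ)` of a group `H` -/
noncomputable def betti1 {G : Type*} [Group G] (H : Subgroup G) : ℕ :=
  Module.finrank ℚ (ℚ ⊗[ℤ] (Additive (Abelianization H)))

/-!
The common power `z = x_i ^ p_i` is central. If `z ∉ H`, then `H` is the kernel of a character of
`K = ⟨H, z⟩`, whose index is at most `n / 2`; each `K` arises from at most exponentially many `H`,
so there are too few such `H` to matter.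

If `z ∈ H`, let `c_i` be the number of cycles of `x_i` acting on the cosets of `H`, which is at
least `n / p_i`. A 1-cocycle of `Γ` with values in `ℚ ^ (Γ ⧸ H)` amounts to functions `v_i` whose
norms `(1 + x_i + ⋯ + x_i ^ (p_i - 1)) v_i` all agree, and this norm operator has rank `c_i`. By
Shapiro's lemma `b_1(H) = (m - 1) n - ∑ c_i + O(1)`, so it remains to show that
`c_i < n / p_i + δ n` with high probability.

Burnside's lemma evaluates `∑ t ^ (number of cycles of x)` over all permutations `x`; taking
`t = n` shows that at most `4 ^ n n! n ^ (-c)` permutations have `c` or more cycles. An excess of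
`δ n` cycles therefore costs a factor `n ^ (-δ n)`. The total number of subgroups is, up to an
exponential factor, at least `n ^ (-χ n)`, where `-χ = m - 1 - ∑ 1 / p_i`: choose `x_i` to be a
product of `⌊n / p_i⌋` disjoint `p_i`-cycles. A given `S` of size `s` is preserved by such a tuple
with probability `O(binom(n, s) ^ (∑ 1 / p_i - m))`, and `∑_s binom(n, s) ^ χ → 0` because
`χ < 0`, so most of these tuples are transitive.
-/

section NumCycles

variable {X Y α : Type*}

/-- The number of cycles of a permutation, fixed points included. -/
noncomputable def numCycles (x : Equiv.Perm X) : ℕ :=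
  Nat.card (Quotient (Equiv.Perm.SameCycle.setoid x))

lemma apply_eq_of_sameCycle {x : Equiv.Perm X} {f : X → α} (hf : ∀ a, f (x a) = f a) {a b : X}
    (hab : x.SameCycle a b) : f a = f b := by
  obtain ⟨k, rfl⟩ := hab
  induction k with
  | zero => simp
  | succ k ih => rw [ih, add_comm, zpow_one_add, Equiv.Perm.mul_apply, hf]
  | pred k ih =>
    rw [ih, ← hf ((x ^ (-(k : ℤ) - 1)) a), ← Equiv.Perm.mul_apply, ← zpow_one_add, add_sub_cancel]

/-- Functions invariant under a permutation are the functions on its set of cycles. -/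
def invariantFunctionEquiv (α : Type*) (x : Equiv.Perm X) :
    {f : X → α // ∀ a, f (x a) = f a} ≃ (Quotient (Equiv.Perm.SameCycle.setoid x) → α) where
  toFun f := Quotient.lift f.1 fun _ _ => apply_eq_of_sameCycle f.2
  invFun g := ⟨fun a => g (Quotient.mk _ a), fun a => congrArg g (Quotient.sound ⟨-1, by simp⟩)⟩
  left_inv _ := rfl
  right_inv g := by ext q; induction q using Quotient.inductionOn; rfl

lemma card_invariant_functions [Finite X] (x : Equiv.Perm X) :
    Nat.card {f : X → α // ∀ a, f (x a) = f a} = Nat.card α ^ numCycles x := by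
  rw [Nat.card_congr (invariantFunctionEquiv α x), Nat.card_fun, numCycles]

lemma numCycles_eq_of_semiconj (e : X ≃ Y) {x : Equiv.Perm X} {y : Equiv.Perm Y}
    (h : ∀ a, e (x a) = y (e a)) : numCycles x = numCycles y := by
  refine Nat.card_congr (Quotient.congr e fun a b => ?_)
  have hy : e.permCongrHom x = y := by
    ext b
    simp [Equiv.permCongrHom, Equiv.permCongr_apply, h]
  have hpow (k : ℤ) : (y ^ k) (e a) = e ((x ^ k) a) := by
    rw [← hy, ← map_zpow]
    simp [Equiv.permCongrHom, Equiv.permCongr_apply]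
  exact exists_congr fun k => by rw [hpow, e.injective.eq_iff]

lemma card_le_mul_numCycles [Finite X] {p : ℕ} (hp : 0 < p) {x : Equiv.Perm X} (hx : x ^ p = 1) :
    Nat.card X ≤ p * numCycles x := by
  let point (a : Fin p × Quotient (Equiv.Perm.SameCycle.setoid x)) : X :=
    (x ^ (a.1 : ℕ)) a.2.out
  have point_surjective : Function.Surjective point := fun b => by
    have hb : x.SameCycle (Quotient.mk (Equiv.Perm.SameCycle.setoid x) b).out b :=
      Quotient.mk_out (s := Equiv.Perm.SameCycle.setoid x) b
    obtain ⟨k, hk, hkb⟩ := hb.exists_pow_eq'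
    exact ⟨(⟨k, hk.trans_le (orderOf_le_of_pow_eq_one hp hx)⟩, Quotient.mk _ b), hkb⟩
  simpa only [Nat.card_prod, Nat.card_fin, numCycles] using
    Nat.card_le_card_of_surjective _ point_surjective

lemma card_div_le_numCycles [Finite X] {p : ℕ} (hp : 0 < p) {x : Equiv.Perm X} (hx : x ^ p = 1) :
    (Nat.card X : ℝ) / p ≤ numCycles x := by
  rw [div_le_iff₀' (by positivity)]
  exact_mod_cast card_le_mul_numCycles hp hx

end NumCycles

section CycleGeneratingFunction

variable {X α : Type*}

open scoped Nat

lemma exists_perm_comp_eq [Fintype X] {f g : X → α}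
    (h : Finset.univ.val.map f = Finset.univ.val.map g) : ∃ σ : Equiv.Perm X, g ∘ σ = f := by
  classical
  have card_fiber (b : α) : Nat.card {a // f a = b} = Nat.card {a // g a = b} := by
    have := congrArg (Multiset.count b) h
    simpa [Multiset.count_map, Fintype.card_subtype, Finset.card_def, eq_comm] using this
  let e (b : α) : {a // f a = b} ≃ {a // g a = b} :=
    (Finite.card_eq.mp (card_fiber b)).some
  exact ⟨Equiv.ofFiberEquiv e, funext fun a => Equiv.ofFiberEquiv_map e a⟩

attribute [local instance] arrowAction

/-- The multiset of values of a function, a complete invariant of its orbit under the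
permutations of the domain. -/
def valuesOfOrbit (X α : Type*) [Fintype X] :
    MulAction.orbitRel.Quotient (Equiv.Perm X) (X → α) → Sym α (Fintype.card X) :=
  Quotient.lift (fun f => ⟨Finset.univ.val.map f, by simp⟩) <| by
    rintro _ f ⟨σ, rfl⟩
    refine Subtype.ext ?_
    change Finset.univ.val.map (f ∘ ⇑σ⁻¹) = Finset.univ.val.map f
    rw [← Multiset.map_map, Multiset.map_univ_val_equiv]

lemma valuesOfOrbit_injective [Fintype X] : Function.Injective (valuesOfOrbit X α) := by
  intro a b
  induction a, b using Quotient.inductionOn₂ with | h f g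
  intro h
  obtain ⟨σ, rfl⟩ := exists_perm_comp_eq (congrArg Subtype.val h)
  exact Quotient.sound ⟨σ⁻¹, rfl⟩

lemma card_fixedBy_perm [Finite X] (x : Equiv.Perm X) :
    Nat.card (MulAction.fixedBy (X → α) x) = Nat.card α ^ numCycles x := by
  rw [← card_invariant_functions]
  refine Nat.card_congr (Equiv.subtypeEquivRight fun f => ?_)
  rw [MulAction.mem_fixedBy, funext_iff, x.surjective.forall]
  refine forall_congr' fun a => ?_
  change f (x⁻¹ (x a)) = f (x a) ↔ f (x a) = f a
  rw [← Equiv.Perm.mul_apply, inv_mul_cancel, Equiv.Perm.one_apply, eq_comm]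

variable (X) in
lemma sum_pow_numCycles_le [Fintype X] [DecidableEq X] (t : ℕ) :
    ∑ x : Equiv.Perm X, t ^ numCycles x ≤
      (t + Fintype.card X - 1).choose (Fintype.card X) * (Fintype.card X)! := by
  classical
  have burnside := MulAction.sum_card_fixedBy_eq_card_orbits_mul_card_group
    (Equiv.Perm X) (X → Fin t)
  simp only [← Nat.card_eq_fintype_card, card_fixedBy_perm, Nat.card_fin] at burnside
  rw [burnside, Nat.card_perm, Nat.card_eq_fintype_card (α := X)]
  gcongr
  have hSym := Sym.card_sym_eq_choose (α := Fin t) (Fintype.card X)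
  rw [Fintype.card_fin, ← Nat.card_eq_fintype_card] at hSym
  rw [← hSym]
  exact Nat.card_le_card_of_injective _ valuesOfOrbit_injective

lemma card_filter_le_numCycles_le [Fintype X] [DecidableEq X] (hX : 0 < Fintype.card X) (c : ℝ)
    [DecidablePred fun x : Equiv.Perm X => c ≤ numCycles x] :
    (Finset.card {x : Equiv.Perm X | c ≤ numCycles x} : ℝ) ≤
      4 ^ Fintype.card X * (Fintype.card X)! * (Fintype.card X : ℝ) ^ (-c) := by
  set n := Fintype.card X
  have hchoose : (n + n - 1).choose n ≤ 4 ^ n :=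
    calc (n + n - 1).choose n ≤ 2 ^ (n + n - 1) := Nat.choose_le_two_pow _ _
      _ ≤ 2 ^ (2 * n) := Nat.pow_le_pow_right two_pos (by omega)
      _ = 4 ^ n := by rw [pow_mul]; rfl
  have hsum : (∑ x : Equiv.Perm X, (n : ℝ) ^ numCycles x) ≤ 4 ^ n * n ! := by
    exact_mod_cast (sum_pow_numCycles_le X n).trans (Nat.mul_le_mul_right _ hchoose)
  rw [Real.rpow_neg (by positivity), ← div_eq_mul_inv, le_div_iff₀ (by positivity)]
  refine le_trans ?_ hsum
  rw [← nsmul_eq_mul, ← Finset.sum_const]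
  refine (Finset.sum_le_sum fun x hx => ?_).trans (Finset.sum_le_sum_of_subset_of_nonneg
    (Finset.subset_univ _) fun x _ _ => by positivity)
  rw [← Real.rpow_natCast]
  exact Real.rpow_le_rpow_of_exponent_le (by exact_mod_cast hX) (Finset.mem_filter.mp hx).2

end CycleGeneratingFunction

section Binomial

lemma choose_mul_choose_le_add_choose_add (a b c d : ℕ) :
    a.choose b * c.choose d ≤ (a + c).choose (b + d) := by
  rw [Nat.add_choose_eq]
  exact Finset.single_le_sum (f := fun k : ℕ × ℕ => a.choose k.1 * c.choose k.2)
    (a := (b, d)) (fun _ _ => Nat.zero_le _) (Finset.HasAntidiagonal.mem_antidiagonal.mpr rfl)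

lemma choose_pow_le_mul_choose_mul (q a p : ℕ) :
    q.choose a ^ p ≤ (p * q).choose (p * a) := by
  induction p with
  | zero => simp
  | succ p ih =>
    rw [pow_succ, add_mul, add_mul, one_mul, one_mul]
    exact (Nat.mul_le_mul_right _ ih).trans (choose_mul_choose_le_add_choose_add _ _ _ _)

lemma two_pow_le_choose {n s : ℕ} (h : 2 * s ≤ n) : 2 ^ s ≤ n.choose s :=
  calc 2 ^ s = Nat.choose 2 1 ^ s := by rw [Nat.choose_one_right]
    _ ≤ (s * 2).choose (s * 1) := choose_pow_le_mul_choose_mul 2 1 s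
    _ ≤ n.choose s := by rw [mul_one, mul_comm]; exact Nat.choose_le_choose s h

lemma self_le_choose {n s : ℕ} (hs : 0 < s) (hsn : s < n) : n ≤ n.choose s := by
  induction n generalizing s with
  | zero => omega
  | succ n ih =>
    obtain ⟨s, rfl⟩ := Nat.exists_eq_add_of_lt hs
    rw [zero_add, Nat.choose_succ_succ'] at *
    have hpos : 0 < n.choose s := Nat.choose_pos (by omega)
    rcases (Nat.lt_succ_iff.mp hsn).lt_or_eq with hlt | rfl
    · have := ih hs hlt
      omega
    · simp

lemma choose_rpow_neg_le_pow {α : ℝ} (hα : 0 ≤ α) {n s k : ℕ} (h : 2 ^ k ≤ n.choose s) :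
    (n.choose s : ℝ) ^ (-α) ≤ ((2 : ℝ) ^ (-α)) ^ k := by
  rw [← Real.rpow_mul_natCast two_pos.le, mul_comm, Real.rpow_natCast_mul two_pos.le]
  exact Real.rpow_le_rpow_of_nonpos (by positivity) (by exact_mod_cast h) (by linarith)

lemma choose_rpow_neg_le {α : ℝ} (hα : 0 ≤ α) {n s : ℕ} (hs : 0 < s) (hsn : s < n) :
    (n.choose s : ℝ) ^ (-(α + α)) ≤
      (n : ℝ) ^ (-α) * (((2 : ℝ) ^ (-α)) ^ s + ((2 : ℝ) ^ (-α)) ^ (n - s)) := by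
  have hchoose : (0 : ℝ) < n.choose s := by exact_mod_cast Nat.choose_pos hsn.le
  rw [neg_add, Real.rpow_add hchoose]
  gcongr ?_ * ?_
  · exact Real.rpow_le_rpow_of_nonpos (by exact_mod_cast hs.trans hsn)
      (by exact_mod_cast self_le_choose hs hsn) (by linarith)
  rcases le_total (2 * s) n with h | h
  · exact (choose_rpow_neg_le_pow hα (two_pow_le_choose h)).trans
      (le_add_of_nonneg_right (by positivity))
  · refine (choose_rpow_neg_le_pow hα ?_).trans (le_add_of_nonneg_left (by positivity))
    rw [← Nat.choose_symm hsn.le]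
    exact two_pow_le_choose (by omega)

lemma sum_Ioo_pow_add_pow_sub_le {r : ℝ} (hr : 0 ≤ r) (hr1 : r < 1) (n : ℕ) :
    ∑ s ∈ Finset.Ioo 0 n, (r ^ s + r ^ (n - s)) ≤ 2 * (1 - r)⁻¹ := by
  have hgeom : ∑ s ∈ Finset.range (n + 1), r ^ s ≤ (1 - r)⁻¹ := by
    rw [← tsum_geometric_of_lt_one hr hr1]
    exact (summable_geometric_of_lt_one hr hr1).sum_le_tsum _ fun _ _ => by positivity
  calc ∑ s ∈ Finset.Ioo 0 n, (r ^ s + r ^ (n - s))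
      ≤ ∑ s ∈ Finset.range (n + 1), (r ^ s + r ^ (n - s)) :=
        Finset.sum_le_sum_of_subset_of_nonneg (fun s hs => by simp at hs ⊢; omega)
          fun _ _ _ => by positivity
    _ = 2 * ∑ s ∈ Finset.range (n + 1), r ^ s := by
        have hreflect := Finset.sum_range_reflect (fun s => r ^ s) (n + 1)
        rw [Nat.add_sub_cancel] at hreflect
        rw [Finset.sum_add_distrib, hreflect, two_mul]
    _ ≤ 2 * (1 - r)⁻¹ := by gcongr

lemma tendsto_sum_choose_rpow_neg {α : ℝ} (hα : 0 < α) :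
    Tendsto (fun n : ℕ => ∑ s ∈ Finset.Ioo 0 n, (n.choose s : ℝ) ^ (-α)) atTop (𝓝 0) := by
  set r : ℝ := (2 : ℝ) ^ (-(α / 2))
  have hr1 : r < 1 := Real.rpow_lt_one_of_one_lt_of_neg one_lt_two (by linarith)
  have hbound (n : ℕ) : ∑ s ∈ Finset.Ioo 0 n, (n.choose s : ℝ) ^ (-α) ≤
      (n : ℝ) ^ (-(α / 2)) * (2 * (1 - r)⁻¹) := by
    refine le_trans (Finset.sum_le_sum fun s hs => ?_) (b := ∑ s ∈ Finset.Ioo 0 n,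
      (n : ℝ) ^ (-(α / 2)) * (r ^ s + r ^ (n - s))) ?_
    · rw [Finset.mem_Ioo] at hs
      simpa only [add_halves] using choose_rpow_neg_le (half_pos hα).le hs.1 hs.2
    · rw [← Finset.mul_sum]
      gcongr
      exact sum_Ioo_pow_add_pow_sub_le (by positivity) hr1 n
  have hlim : Tendsto (fun n : ℕ => (n : ℝ) ^ (-(α / 2)) * (2 * (1 - r)⁻¹)) atTop (𝓝 0) := by
    simpa using ((tendsto_rpow_neg_atTop (half_pos hα)).comp
      tendsto_natCast_atTop_atTop).mul_const (2 * (1 - r)⁻¹)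
  exact squeeze_zero (fun n => by positivity) hbound hlim

end Binomial

section CycleClass

open scoped Nat

variable {X : Type*} [Fintype X] [DecidableEq X] {p : ℕ} {x : Equiv.Perm X}

variable (X p) in
/-- The permutations of `X` with as many `p`-cycles as fit into `X` and no other nontrivial
cycles. -/
def cycleClass : Finset (Equiv.Perm X) :=
  {x | x.cycleType = Multiset.replicate (Fintype.card X / p) p}

lemma mem_cycleClass :
    x ∈ cycleClass X p ↔ x.cycleType = Multiset.replicate (Fintype.card X / p) p := by
  rw [cycleClass, Finset.mem_filter_univ]

lemma pow_eq_one_of_mem_cycleClass (hx : x ∈ cycleClass X p) : x ^ p = 1 := by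
  rw [← orderOf_dvd_iff_pow_eq_one, ← Equiv.Perm.lcm_cycleType, mem_cycleClass.mp hx,
    Multiset.lcm_dvd]
  exact fun a ha => (Multiset.eq_of_mem_replicate ha).dvd

variable (X) in
lemma card_cycleClass_mul_eq (hp : 2 ≤ p) :
    (cycleClass X p).card *
      ((Fintype.card X % p)! * p ^ (Fintype.card X / p) * (Fintype.card X / p)!) =
        (Fintype.card X)! := by
  set n := Fintype.card X
  have hsum : (Multiset.replicate (n / p) p).sum = n / p * p := by
    rw [Multiset.sum_replicate, smul_eq_mul]
  have hle : (Multiset.replicate (n / p) p).sum ≤ n ∧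
      ∀ a ∈ Multiset.replicate (n / p) p, 2 ≤ a :=
    ⟨hsum ▸ Nat.div_mul_le_self n p, fun a ha => Multiset.eq_of_mem_replicate ha ▸ hp⟩
  have hcount : ∏ k ∈ (Multiset.replicate (n / p) p).toFinset,
      ((Multiset.replicate (n / p) p).count k)! = (n / p)! := by
    rcases eq_or_ne (n / p) 0 with h | h
    · simp [h]
    · rw [Multiset.toFinset_replicate, if_neg h, Finset.prod_singleton,
        Multiset.count_replicate_self]
  have hcard := Equiv.Perm.card_of_cycleType_mul_eq X (Multiset.replicate (n / p) p)
  rwa [if_pos hle, hcount, hsum, Multiset.prod_replicate, ← Nat.mod_eq_sub_div_mul] at hcard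

variable (X) in
lemma factorial_card_le_card_cycleClass_mul (hp : 2 ≤ p) :
    (Fintype.card X)! ≤
      (cycleClass X p).card * Fintype.card X ^ (Fintype.card X / p + Fintype.card X % p) := by
  rw [← card_cycleClass_mul_eq X hp, mul_assoc, add_comm, pow_add]
  set n := Fintype.card X
  have hrem : (n % p)! ≤ n ^ (n % p) :=
    (Nat.factorial_le_pow _).trans (Nat.pow_le_pow_left (Nat.mod_le n p) _)
  have hquot : p ^ (n / p) * (n / p)! ≤ n ^ (n / p) :=
    calc p ^ (n / p) * (n / p)! ≤ p ^ (n / p) * (n / p) ^ (n / p) :=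
          Nat.mul_le_mul_left _ (Nat.factorial_le_pow _)
      _ = (p * (n / p)) ^ (n / p) := (mul_pow _ _ _).symm
      _ ≤ n ^ (n / p) := Nat.pow_le_pow_left (Nat.mul_div_le n p) _
  gcongr

lemma card_support_of_mem_cycleClass (hx : x ∈ cycleClass X p) :
    x.support.card = Fintype.card X / p * p := by
  rw [← Equiv.Perm.sum_cycleType, mem_cycleClass.mp hx, Multiset.sum_replicate, smul_eq_mul]

lemma card_compl_support_of_mem_cycleClass (hx : x ∈ cycleClass X p) :
    x.supportᶜ.card = Fintype.card X % p := by
  rw [Finset.card_compl, card_support_of_mem_cycleClass hx, Nat.mod_eq_sub_div_mul]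

lemma card_cycleFactorsFinset_of_mem_cycleClass (hx : x ∈ cycleClass X p) :
    x.cycleFactorsFinset.card = Fintype.card X / p := by
  have hcard := congrArg Multiset.card (mem_cycleClass.mp hx)
  rwa [Equiv.Perm.cycleType_def, Multiset.card_map, Multiset.card_replicate] at hcard

lemma card_support_of_mem_cycleFactorsFinset (hx : x ∈ cycleClass X p) {c : Equiv.Perm X}
    (hc : c ∈ x.cycleFactorsFinset) : c.support.card = p := by
  refine Multiset.eq_of_mem_replicate (n := Fintype.card X / p) ?_
  rw [← mem_cycleClass.mp hx, Equiv.Perm.cycleType_def]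
  exact Multiset.mem_map_of_mem _ hc

end CycleClass

section InvariantFinsets

open scoped Pointwise

variable {X : Type*} [Fintype X] [DecidableEq X] {p : ℕ} {x : Equiv.Perm X} {T : Finset X}

/-- The cycles of `x` supported in `T`. -/
def cyclesIn (x : Equiv.Perm X) (T : Finset X) : Finset (Equiv.Perm X) :=
  {c ∈ x.cycleFactorsFinset | c.support ⊆ T}

lemma inter_support_eq_biUnion_cyclesIn (hT : x • T = T) :
    T ∩ x.support = (cyclesIn x T).biUnion Equiv.Perm.support := by
  have apply_mem_iff (a : X) : (x a ∈ T) = (a ∈ T) := by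
    conv_lhs => rw [← hT]
    exact propext (Finset.smul_mem_smul_finset_iff (b := a) x)
  ext a
  simp only [Finset.mem_inter, Finset.mem_biUnion, cyclesIn, Finset.mem_filter]
  constructor
  · rintro ⟨haT, hax⟩
    refine ⟨x.cycleOf a, ⟨Equiv.Perm.cycleOf_mem_cycleFactorsFinset_iff.mpr hax, fun b hb => ?_⟩,
      Equiv.Perm.mem_support_cycleOf_iff.mpr ⟨Equiv.Perm.SameCycle.refl x a, hax⟩⟩
    rwa [← apply_eq_of_sameCycle apply_mem_iff (Equiv.Perm.mem_support_cycleOf_iff.mp hb).1]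
  · rintro ⟨c, ⟨hc, hcT⟩, hac⟩
    exact ⟨hcT hac, Equiv.Perm.mem_cycleFactorsFinset_support_le hc hac⟩

lemma card_inter_support_eq (hx : x ∈ cycleClass X p) (hT : x • T = T) :
    (T ∩ x.support).card = (cyclesIn x T).card * p := by
  rw [inter_support_eq_biUnion_cyclesIn hT, Finset.card_biUnion]
  · exact Finset.sum_const_nat fun c hc =>
      card_support_of_mem_cycleFactorsFinset hx (Finset.mem_filter.mp hc).1
  · intro c hc d hd hcd
    exact Equiv.Perm.disjoint_iff_disjoint_support.mp
      (Equiv.Perm.cycleFactorsFinset_pairwise_disjoint x (Finset.mem_filter.mp hc).1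
        (Finset.mem_filter.mp hd).1 hcd)

lemma card_sdiff_support_and_card_cyclesIn (hp : 0 < p) (hx : x ∈ cycleClass X p) (hT : x • T = T) :
    (T \ x.support).card = T.card % p ∧ (cyclesIn x T).card = T.card / p := by
  have hlt : (T \ x.support).card < p :=
    calc (T \ x.support).card ≤ x.supportᶜ.card :=
          Finset.card_le_card fun a ha => Finset.mem_compl.mpr (Finset.mem_sdiff.mp ha).2
      _ = Fintype.card X % p := card_compl_support_of_mem_cycleClass hx
      _ < p := Nat.mod_lt _ hp
  have hcard := Finset.card_inter_add_card_sdiff T x.support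
  rw [card_inter_support_eq hx hT] at hcard
  rw [← hcard, Nat.mul_add_mod', Nat.mod_eq_of_lt hlt, add_comm, Nat.add_mul_div_right _ _ hp,
    Nat.div_eq_of_lt hlt, zero_add]
  exact ⟨rfl, rfl⟩

/-- The subsets of size `s` preserved by `x`. -/
def invariantFinsets (x : Equiv.Perm X) (s : ℕ) : Finset (Finset X) :=
  {T ∈ Finset.powersetCard s Finset.univ | x • T = T}

lemma card_invariantFinsets_le (hp : 0 < p) (hx : x ∈ cycleClass X p) (s : ℕ) :
    (invariantFinsets x s).card ≤
      (Fintype.card X % p).choose (s % p) * (Fintype.card X / p).choose (s / p) := by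
  rw [← card_compl_support_of_mem_cycleClass hx, ← card_cycleFactorsFinset_of_mem_cycleClass hx,
    ← Finset.card_powersetCard, ← Finset.card_powersetCard, ← Finset.card_product]
  have mem_iff {T : Finset X} (hT : T ∈ invariantFinsets x s) : T.card = s ∧ x • T = T := by
    simpa [invariantFinsets] using hT
  refine Finset.card_le_card_of_injOn (fun T => (T \ x.support, cyclesIn x T)) ?_ ?_
  · intro T hT
    obtain ⟨rfl, hxT⟩ := mem_iff hT
    obtain ⟨hfix, hcyc⟩ := card_sdiff_support_and_card_cyclesIn hp hx hxT
    simp only [Finset.coe_product, Set.mem_prod, Finset.mem_coe, Finset.mem_powersetCard]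
    exact ⟨⟨fun a ha => Finset.mem_compl.mpr (Finset.mem_sdiff.mp ha).2, hfix⟩,
      Finset.filter_subset _ _, hcyc⟩
  · intro T hT U hU hTU
    obtain ⟨hfix, hcyc⟩ := Prod.ext_iff.mp hTU
    rw [← Finset.sdiff_union_inter T x.support, ← Finset.sdiff_union_inter U x.support,
      inter_support_eq_biUnion_cyclesIn (mem_iff hT).2,
      inter_support_eq_biUnion_cyclesIn (mem_iff hU).2]
    exact congrArg₂ (fun F C => F ∪ Finset.biUnion C Equiv.Perm.support) hfix hcyc

lemma card_invariantFinsets_pow_le (hp : 0 < p) (hx : x ∈ cycleClass X p) (s : ℕ) :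
    (invariantFinsets x s).card ^ p ≤ (2 ^ p) ^ p * (Fintype.card X).choose s := by
  set n := Fintype.card X
  have hfix : (n % p).choose (s % p) ^ (p - 1) ≤ (2 ^ p) ^ p :=
    calc (n % p).choose (s % p) ^ (p - 1) ≤ (2 ^ (n % p)) ^ (p - 1) :=
          Nat.pow_le_pow_left (Nat.choose_le_two_pow _ _) _
      _ ≤ (2 ^ p) ^ p :=
          (Nat.pow_le_pow_left (Nat.pow_le_pow_right two_pos (Nat.mod_lt n hp).le) _).trans
            (Nat.pow_le_pow_right (by positivity) (Nat.sub_le p 1))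
  calc (invariantFinsets x s).card ^ p
      ≤ ((n % p).choose (s % p) * (n / p).choose (s / p)) ^ p :=
        Nat.pow_le_pow_left (card_invariantFinsets_le hp hx s) p
    _ = (n % p).choose (s % p) ^ (p - 1) *
          ((n % p).choose (s % p) * (n / p).choose (s / p) ^ p) := by
        rw [mul_pow, ← mul_assoc, pow_sub_one_mul hp.ne']
    _ ≤ (2 ^ p) ^ p * ((n % p).choose (s % p) * (p * (n / p)).choose (p * (s / p))) :=
        Nat.mul_le_mul hfix (Nat.mul_le_mul_left _ (choose_pow_le_mul_choose_mul _ _ _))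
    _ ≤ (2 ^ p) ^ p * (n % p + p * (n / p)).choose (s % p + p * (s / p)) :=
        Nat.mul_le_mul_left _ (choose_mul_choose_le_add_choose_add _ _ _ _)
    _ = (2 ^ p) ^ p * n.choose s := by rw [Nat.mod_add_div, Nat.mod_add_div]

lemma card_invariantFinsets_le_rpow (hp : 0 < p) (hx : x ∈ cycleClass X p) (s : ℕ) :
    ((invariantFinsets x s).card : ℝ) ≤ 2 ^ p * ((Fintype.card X).choose s : ℝ) ^ (1 / p : ℝ) := by
  refine le_of_pow_le_pow_left₀ hp.ne' (by positivity) ?_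
  rw [mul_pow, one_div, Real.rpow_inv_natCast_pow (by positivity) hp.ne']
  exact_mod_cast card_invariantFinsets_pow_le hp hx s

end InvariantFinsets

section TransitiveTuples

open scoped Nat Pointwise

variable {X ι : Type*}

lemma sum_filter_card_mem_eq [Fintype X] (I : Finset ℕ) (g : ℕ → ℝ) :
    ∑ S : Finset X with S.card ∈ I, g S.card = ∑ s ∈ I, (Fintype.card X).choose s * g s := by
  rw [← Finset.sum_fiberwise_of_maps_to (t := I) (g := Finset.card)
    fun S hS => (Finset.mem_filter.mp hS).2]
  refine Finset.sum_congr rfl fun s hs => ?_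
  have hfiber : ({S ∈ {S : Finset X | S.card ∈ I} | S.card = s} : Finset (Finset X)) =
      Finset.powersetCard s Finset.univ := by
    ext S
    simp only [Finset.mem_filter, Finset.mem_univ, true_and, Finset.mem_powersetCard,
      Finset.subset_univ, and_iff_right_iff_imp]
    rintro rfl
    exact hs
  rw [hfiber, Finset.sum_congr rfl fun S hS => by rw [(Finset.mem_powersetCard.mp hS).2],
    Finset.sum_const, Finset.card_powersetCard, Finset.card_univ, nsmul_eq_mul]

variable [DecidableEq X]

lemma card_filter_smul_eq_of_card_eq {C : Finset (Equiv.Perm X)}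
    (hC : ∀ g, ∀ x ∈ C, g * x * g⁻¹ ∈ C) {S T : Finset X} (hST : S.card = T.card) :
    Finset.card {x ∈ C | x • S = S} = Finset.card {x ∈ C | x • T = T} := by
  have := Set.powersetCard.isPretransitive (α := X) (n := T.card)
  obtain ⟨g, hg⟩ := MulAction.exists_smul_eq (Equiv.Perm X)
    (⟨S, hST⟩ : Set.powersetCard X T.card) ⟨T, rfl⟩
  obtain rfl : g • S = T := congrArg Subtype.val hg
  refine Finset.card_equiv (MulAut.conj g).toEquiv fun x => ?_
  have hmem : x ∈ C ↔ g * x * g⁻¹ ∈ C :=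
    ⟨hC g x, fun h => by simpa [mul_assoc] using hC g⁻¹ _ h⟩
  simp only [Finset.mem_filter, MulEquiv.toEquiv_eq_coe, MulEquiv.coe_toEquiv,
    MulAut.conj_apply, ← hmem, mul_smul, inv_smul_smul, smul_left_cancel_iff]

variable [Fintype X]

lemma choose_mul_card_filter_smul_eq {C : Finset (Equiv.Perm X)}
    (hC : ∀ g, ∀ x ∈ C, g * x * g⁻¹ ∈ C) (S : Finset X) :
    (Fintype.card X).choose S.card * Finset.card {x ∈ C | x • S = S} =
      ∑ x ∈ C, (invariantFinsets x S.card).card := by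
  calc (Fintype.card X).choose S.card * Finset.card {x ∈ C | x • S = S}
      = ∑ T ∈ Finset.powersetCard S.card Finset.univ, Finset.card {x ∈ C | x • T = T} := by
        rw [← Finset.card_univ, ← Finset.card_powersetCard, Finset.sum_const_nat fun T hT => ?_]
        exact card_filter_smul_eq_of_card_eq hC (Finset.mem_powersetCard.mp hT).2
    _ = ∑ x ∈ C, (invariantFinsets x S.card).card :=
        Finset.sum_card_bipartiteAbove_eq_sum_card_bipartiteBelow fun T x => x • T = T

lemma card_filter_cycleClass_smul_eq_le {p : ℕ} (hp : 0 < p) (S : Finset X) :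
    (Finset.card {x ∈ cycleClass X p | x • S = S} : ℝ) ≤
      (cycleClass X p).card *
        (2 ^ p * ((Fintype.card X).choose S.card : ℝ) ^ ((1 / p : ℝ) - 1)) := by
  have hconj (g : Equiv.Perm X) (x : Equiv.Perm X) (hx : x ∈ cycleClass X p) :
      g * x * g⁻¹ ∈ cycleClass X p := by
    rwa [mem_cycleClass, Equiv.Perm.cycleType_conj, ← mem_cycleClass]
  set c := ((Fintype.card X).choose S.card : ℝ) with hc_def
  have hc : 0 < c := Nat.cast_pos.mpr (Nat.choose_pos (Finset.card_le_univ S))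
  have hcount : c * Finset.card {x ∈ cycleClass X p | x • S = S} ≤
      (cycleClass X p).card * (2 ^ p * c ^ (1 / p : ℝ)) := by
    rw [← nsmul_eq_mul (cycleClass X p).card]
    calc c * Finset.card {x ∈ cycleClass X p | x • S = S}
        = ∑ x ∈ cycleClass X p, ((invariantFinsets x S.card).card : ℝ) := by
          rw [hc_def]
          exact_mod_cast choose_mul_card_filter_smul_eq hconj S
      _ ≤ _ := Finset.sum_le_card_nsmul _ _ _ fun x hx => card_invariantFinsets_le_rpow hp hx _
  rw [Real.rpow_sub_one hc.ne', ← mul_div_assoc, ← mul_div_assoc, le_div_iff₀' hc]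
  exact hcount

/-- A tuple of permutations is transitive if it preserves no proper nonempty subset. -/
def IsTransitiveTuple (x : ι → Equiv.Perm X) : Prop :=
  ∀ S : Finset X, (∀ i, x i • S = S) → S = ∅ ∨ S = Finset.univ

open scoped Classical in
lemma card_filter_not_isTransitiveTuple_le [Fintype ι] (A : ι → Finset (Equiv.Perm X)) :
    Finset.card {x ∈ Fintype.piFinset A | ¬ IsTransitiveTuple x} ≤
      ∑ S : Finset X with S.card ∈ Finset.Ioo 0 (Fintype.card X),
        ∏ i, Finset.card {x ∈ A i | x • S = S} := by
  simp only [← Fintype.card_piFinset]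
  refine le_trans (Finset.card_le_card fun x hx => ?_) Finset.card_biUnion_le
  simp only [Finset.mem_filter, Fintype.mem_piFinset, IsTransitiveTuple, not_forall,
    not_or, exists_prop] at hx
  obtain ⟨hxA, S, hxS, hS0, hS1⟩ := hx
  simp only [Finset.mem_biUnion, Fintype.mem_piFinset, Finset.mem_filter, Finset.mem_Ioo]
  exact ⟨S, ⟨Finset.mem_univ S, Finset.card_pos.mpr (Finset.nonempty_iff_ne_empty.mpr hS0),
    (Finset.card_lt_iff_ne_univ S).mpr hS1⟩, fun i => ⟨hxA i, hxS i⟩⟩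

variable [Fintype ι] {p : ι → ℕ}

/-- Minus the Euler characteristic of the free product of the cyclic groups `ℤ / p i`, that is
`-χ(Γ / Z)` where `Z` is the infinite cyclic subgroup generated by the common power. -/
noncomputable def negEulerChar (p : ι → ℕ) : ℝ :=
  Fintype.card ι - 1 - ∑ i, (1 / p i : ℝ)

lemma prod_card_filter_cycleClass_smul_eq_le (hp : ∀ i, 0 < p i) (S : Finset X) :
    ∏ i, (Finset.card {x ∈ cycleClass X (p i) | x • S = S} : ℝ) ≤
      (∏ i, ((cycleClass X (p i)).card : ℝ)) * 2 ^ (∑ i, p i) *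
        ((Fintype.card X).choose S.card : ℝ) ^ (∑ i, (1 / p i : ℝ) - Fintype.card ι) := by
  have hc : (0 : ℝ) < (Fintype.card X).choose S.card := by
    exact_mod_cast Nat.choose_pos (Finset.card_le_univ S)
  refine (Finset.prod_le_prod (fun i _ => by positivity)
    fun i _ => card_filter_cycleClass_smul_eq_le (hp i) S).trans_eq ?_
  rw [Finset.prod_mul_distrib, Finset.prod_mul_distrib, Finset.prod_pow_eq_pow_sum,
    ← Real.rpow_sum_of_pos hc, Finset.sum_sub_distrib, Finset.sum_const, nsmul_one,
    Finset.card_univ, mul_assoc]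

open scoped Classical in
variable (X) in
lemma card_filter_cycleClass_not_isTransitiveTuple_le (hp : ∀ i, 0 < p i) :
    (Finset.card {x ∈ Fintype.piFinset fun i => cycleClass X (p i) | ¬ IsTransitiveTuple x} : ℝ) ≤
      (∏ i, ((cycleClass X (p i)).card : ℝ)) * (2 ^ (∑ i, p i) *
        ∑ s ∈ Finset.Ioo 0 (Fintype.card X), ((Fintype.card X).choose s : ℝ) ^
          (-negEulerChar p)) := by
  set n := Fintype.card X
  set β := ∑ i, (1 / p i : ℝ)
  set N := ∏ i, ((cycleClass X (p i)).card : ℝ)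
  calc _ ≤ ∑ S : Finset X with S.card ∈ Finset.Ioo 0 n,
        ∏ i, (Finset.card {x ∈ cycleClass X (p i) | x • S = S} : ℝ) := by
        exact_mod_cast card_filter_not_isTransitiveTuple_le fun i => cycleClass X (p i)
    _ ≤ ∑ S : Finset X with S.card ∈ Finset.Ioo 0 n,
        N * 2 ^ (∑ i, p i) * (n.choose S.card : ℝ) ^ (β - Fintype.card ι) :=
        Finset.sum_le_sum fun S _ => prod_card_filter_cycleClass_smul_eq_le hp S
    _ = ∑ s ∈ Finset.Ioo 0 n,
        n.choose s * (N * 2 ^ (∑ i, p i) * (n.choose s : ℝ) ^ (β - Fintype.card ι)) :=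
        sum_filter_card_mem_eq _
          fun s => N * 2 ^ (∑ i, p i) * (n.choose s : ℝ) ^ (β - Fintype.card ι)
    _ = _ := by
        rw [← mul_assoc, Finset.mul_sum]
        refine Finset.sum_congr rfl fun s hs => ?_
        have hc : (n.choose s : ℝ) ≠ 0 := by
          exact_mod_cast (Nat.choose_pos (Finset.mem_Ioo.mp hs).2.le).ne'
        rw [show -negEulerChar p = (β - Fintype.card ι) + 1 by rw [negEulerChar]; ring,
          Real.rpow_add_one hc]
        ring

open scoped Classical in
lemma eventually_half_le_card_filter_isTransitiveTuple (hp : ∀ i, 0 < p i)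
    (hχ : 0 < negEulerChar p) :
    ∀ᶠ n : ℕ in atTop, (∏ i, ((cycleClass (Fin n) (p i)).card : ℝ)) / 2 ≤
      Finset.card {x ∈ Fintype.piFinset fun i => cycleClass (Fin n) (p i) |
        IsTransitiveTuple x} := by
  have hlim := (tendsto_sum_choose_rpow_neg hχ).const_mul (2 ^ (∑ i, p i))
  rw [mul_zero] at hlim
  filter_upwards [hlim.eventually_le_const (half_pos one_pos)] with n hn
  have hbad := card_filter_cycleClass_not_isTransitiveTuple_le (Fin n) hp
  have hsplit : (∏ i, ((cycleClass (Fin n) (p i)).card : ℝ)) =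
      Finset.card {x ∈ Fintype.piFinset fun i => cycleClass (Fin n) (p i) | IsTransitiveTuple x} +
      Finset.card {x ∈ Fintype.piFinset fun i => cycleClass (Fin n) (p i) |
        ¬ IsTransitiveTuple x} := by
    rw [← Nat.cast_prod, ← Fintype.card_piFinset, ← Nat.cast_add,
      Finset.card_filter_add_card_filter_not]
  simp only [Fintype.card_fin] at hbad
  have hN : (0 : ℝ) ≤ ∏ i, ((cycleClass (Fin n) (p i)).card : ℝ) := by positivity
  have hhalf := hbad.trans (mul_le_mul_of_nonneg_left hn hN)
  linarith only [hsplit, hhalf]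

variable (X) in
lemma factorial_pow_mul_rpow_le_prod_card_cycleClass (hX : 0 < Fintype.card X)
    (hp : ∀ i, 2 ≤ p i) :
    ((Fintype.card X)! : ℝ) ^ Fintype.card ι *
        (Fintype.card X : ℝ) ^ (-(Fintype.card X * ∑ i, (1 / p i : ℝ) + ∑ i, (p i : ℝ))) ≤
      ∏ i, ((cycleClass X (p i)).card : ℝ) := by
  set n := Fintype.card X
  have hn : (0 : ℝ) < n := by exact_mod_cast hX
  rw [Finset.mul_sum, ← Finset.sum_add_distrib, ← Finset.sum_neg_distrib,
    Real.rpow_sum_of_pos hn, ← Finset.card_univ, ← Finset.prod_const, ← Finset.prod_mul_distrib]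
  refine Finset.prod_le_prod (fun i _ => by positivity) fun i _ => ?_
  rw [Real.rpow_neg hn.le, ← div_eq_mul_inv, div_le_iff₀ (by positivity)]
  have hexp : ((n / p i + n % p i : ℕ) : ℝ) ≤ n * (1 / p i : ℝ) + p i := by
    have hdiv : ((n / p i : ℕ) : ℝ) ≤ n * (1 / p i : ℝ) := by
      rw [mul_one_div]
      exact Nat.cast_div_le
    have hmod : ((n % p i : ℕ) : ℝ) ≤ p i := by
      exact_mod_cast (Nat.mod_lt n (two_pos.trans_le (hp i))).le
    push_cast
    exact add_le_add hdiv hmod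
  calc (n ! : ℝ) ≤ (cycleClass X (p i)).card * (n : ℝ) ^ (n / p i + n % p i) := by
        exact_mod_cast factorial_card_le_card_cycleClass_mul X (hp i)
    _ ≤ (cycleClass X (p i)).card * (n : ℝ) ^ (n * (1 / p i : ℝ) + p i) := by
        rw [← Real.rpow_natCast]
        gcongr
        exact_mod_cast hX

lemma eventually_le_card_transitiveTuples (hp : ∀ i, 2 ≤ p i) (hχ : 0 < negEulerChar p) :
    ∀ᶠ n : ℕ in atTop, (n ! : ℝ) ^ Fintype.card ι *
        (n : ℝ) ^ (-(n * ∑ i, (1 / p i : ℝ) + ∑ i, (p i : ℝ))) / 2 ≤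
      Nat.card {x : ι → Equiv.Perm (Fin n) // (∀ i, x i ^ p i = 1) ∧ IsTransitiveTuple x} := by
  classical
  filter_upwards [eventually_half_le_card_filter_isTransitiveTuple
    (fun i => two_pos.trans_le (hp i)) hχ, eventually_gt_atTop 0] with n hhalf hn
  have hprod := factorial_pow_mul_rpow_le_prod_card_cycleClass (Fin n) (by simpa using hn) hp
  rw [Fintype.card_fin] at hprod
  refine (div_le_div_of_nonneg_right hprod two_pos.le).trans (hhalf.trans ?_)
  rw [Nat.card_eq_fintype_card, Fintype.card_subtype]
  refine Nat.cast_le.mpr (Finset.card_le_card fun x hx => ?_)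
  obtain ⟨hxc, hxt⟩ := Finset.mem_filter.mp hx
  exact Finset.mem_filter.mpr ⟨Finset.mem_univ x, fun i =>
    pow_eq_one_of_mem_cycleClass (Fintype.mem_piFinset.mp hxc i), hxt⟩

end TransitiveTuples

section CosetRepresentations

variable {G X : Type*} [Group G]

/-- The permutation representation of `G` on the cosets of `H`, transported to `X` along a
labelling `e` of the cosets. -/
def cosetHom (H : Subgroup G) (e : G ⧸ H ≃ X) : G →* Equiv.Perm X :=
  e.permCongrHom.toMonoidHom.comp (MulAction.toPermHom G (G ⧸ H))

/-- Transitivity of a permutation representation. -/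
def IsTransitiveHom (φ : G →* Equiv.Perm X) : Prop :=
  ∀ a b, ∃ g, φ g a = b

lemma cosetHom_apply_apply (H : Subgroup G) (e : G ⧸ H ≃ X) (g : G) (q : G ⧸ H) :
    cosetHom H e g (e q) = e (g • q) := by
  simp [cosetHom]

lemma cosetHom_apply_one (H : Subgroup G) (e : G ⧸ H ≃ X) (g : G) :
    cosetHom H e g (e (1 : G)) = e g := by
  rw [cosetHom_apply_apply, MulAction.Quotient.smul_coe, smul_eq_mul, mul_one]

lemma isTransitiveHom_cosetHom (H : Subgroup G) (e : G ⧸ H ≃ X) :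
    IsTransitiveHom (cosetHom H e) := by
  intro a b
  obtain ⟨q, rfl⟩ := e.surjective a
  obtain ⟨r, rfl⟩ := e.surjective b
  obtain ⟨g, rfl⟩ := MulAction.exists_smul_eq G q r
  exact ⟨g, cosetHom_apply_apply H e g q⟩

lemma mem_iff_cosetHom_apply_one (H : Subgroup G) (e : G ⧸ H ≃ X) (g : G) :
    g ∈ H ↔ cosetHom H e g (e (1 : G)) = e (1 : G) := by
  rw [cosetHom_apply_one, e.injective.eq_iff, eq_comm, QuotientGroup.eq, inv_one, one_mul]

variable (G X) in
/-- Sends a subgroup with labelled cosets to its permutation representation, pointed at the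
label of the trivial coset. -/
def pointedCosetHom (a : Σ H : Subgroup G, G ⧸ H ≃ X) : (G →* Equiv.Perm X) × X :=
  (cosetHom a.1 a.2, a.2 (1 : G))

lemma pointedCosetHom_injective : Function.Injective (pointedCosetHom G X) := by
  rintro ⟨H, e⟩ ⟨K, f⟩ h
  obtain ⟨hφ, hone⟩ : cosetHom H e = cosetHom K f ∧ e (1 : G) = f (1 : G) := Prod.ext_iff.mp h
  obtain rfl : H = K := by
    ext g
    rw [mem_iff_cosetHom_apply_one H e, mem_iff_cosetHom_apply_one K f, hφ, hone]
  congr 1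
  ext q
  induction q using QuotientGroup.induction_on with | H g
  rw [← cosetHom_apply_one H e, ← cosetHom_apply_one H f, hφ, hone]

lemma exists_pointedCosetHom_eq {φ : G →* Equiv.Perm X} (hφ : IsTransitiveHom φ) (a : X) :
    ∃ b, pointedCosetHom G X b = (φ, a) := by
  let _ : MulAction G X := MulAction.compHom X φ
  have : MulAction.IsPretransitive G X := ⟨hφ⟩
  let e : G ⧸ MulAction.stabilizer G a ≃ X :=
    (MulAction.orbitEquivQuotientStabilizer G a).symm.trans
      (Equiv.subtypeUnivEquiv fun b => (MulAction.orbit_eq_univ G a).symm ▸ Set.mem_univ b)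
  have he (g : G) : e g = φ g a := rfl
  refine ⟨⟨_, e⟩, Prod.ext (MonoidHom.ext fun g => Equiv.ext fun b => ?_) ?_⟩
  · obtain ⟨q, rfl⟩ := e.surjective b
    induction q using QuotientGroup.induction_on with | H k
    simp only [pointedCosetHom]
    rw [cosetHom_apply_apply, MulAction.Quotient.smul_coe, smul_eq_mul, he, he, map_mul,
      Equiv.Perm.mul_apply]
  · simp only [pointedCosetHom]
    rw [he, map_one, Equiv.Perm.one_apply]

variable (X) in
/-- Both sides count the subgroups `H` together with a labelling of the cosets of `H` by `X`. -/
lemma card_subgroups_mul_factorial [Finite X] [Nonempty X] {P : Subgroup G → Prop}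
    {Q : (G →* Equiv.Perm X) → Prop} (hPQ : ∀ H (e : G ⧸ H ≃ X), P H ↔ Q (cosetHom H e)) :
    Nat.card {H : Subgroup G // H.index = Nat.card X ∧ P H} * (Nat.card X).factorial =
      Nat.card {φ : G →* Equiv.Perm X // IsTransitiveHom φ ∧ Q φ} * Nat.card X := by
  let S := {H : Subgroup G // H.index = Nat.card X ∧ P H}
  let T := {φ : G →* Equiv.Perm X // IsTransitiveHom φ ∧ Q φ}
  have labelling (H : S) : Nonempty (G ⧸ H.1 ≃ X) := by
    have : Finite (G ⧸ H.1) := Nat.finite_of_card_ne_zero (H.2.1.trans_ne Nat.card_pos.ne')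
    exact Finite.card_eq.mp H.2.1
  let labellingEquiv : S × Equiv.Perm X ≃ Σ H : S, G ⧸ H.1 ≃ X :=
    (Equiv.sigmaEquivProd _ _).symm.trans
      (Equiv.sigmaCongrRight fun H => Equiv.equivCongr (labelling H).some.symm (Equiv.refl X))
  let F (a : Σ H : S, G ⧸ H.1 ≃ X) : T × X :=
    (⟨cosetHom a.1.1 a.2, isTransitiveHom_cosetHom _ _, (hPQ _ _).mp a.1.2.2⟩, a.2 (1 : G))
  have F_bijective : Function.Bijective F := by
    constructor
    · rintro ⟨⟨H, hH⟩, e⟩ ⟨⟨K, hK⟩, f⟩ h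
      obtain ⟨hφ, hone⟩ := Prod.ext_iff.mp h
      have := @pointedCosetHom_injective G X _ ⟨H, e⟩ ⟨K, f⟩
        (Prod.ext (congrArg Subtype.val hφ) hone)
      cases this
      rfl
    · rintro ⟨⟨φ, hφ, hQ⟩, a⟩
      obtain ⟨⟨H, e⟩, h⟩ := exists_pointedCosetHom_eq hφ a
      cases h
      exact ⟨⟨⟨H, Nat.card_congr e, (hPQ H e).mpr hQ⟩, e⟩, rfl⟩
  rw [← Nat.card_perm, ← Nat.card_prod, ← Nat.card_prod]
  exact Nat.card_congr (labellingEquiv.trans (Equiv.ofBijective F F_bijective))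

end CosetRepresentations

section CocyclesOfActions

variable {K G X : Type*} [Field K] [Group G] [MulAction G X]

variable (K G X) in
/-- The 1-cocycles of `G` with values in the module of functions `X → K`, written for the right
action by precomposition, so that no inverses occur. -/
def functionCocycles : Submodule K (G → X → K) where
  carrier := {ψ | ∀ g h x, ψ (g * h) x = ψ g (h • x) + ψ h x}
  add_mem' {ψ ψ'} hψ hψ' g h x := by
    simp only [Pi.add_apply, hψ g h x, hψ' g h x]
    ring
  zero_mem' g h x := by simp
  smul_mem' c ψ hψ g h x := by simp only [Pi.smul_apply, hψ g h x, smul_add]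

lemma cocycle_mul (ψ : functionCocycles K G X) (g h : G) (x : X) :
    ψ.1 (g * h) x = ψ.1 g (h • x) + ψ.1 h x :=
  ψ.2 g h x

lemma cocycle_one (ψ : functionCocycles K G X) (x : X) : ψ.1 1 x = 0 := by
  simpa using cocycle_mul ψ 1 1 x

lemma cocycle_eq_zero_of_closure_eq_top {S : Set G} (hS : Subgroup.closure S = ⊤)
    {ψ : functionCocycles K G X} (hψ : ∀ g ∈ S, ψ.1 g = 0) : ψ = 0 := by
  refine Subtype.ext (funext fun g => ?_)
  have hg : g ∈ Subgroup.closure S := hS ▸ Subgroup.mem_top g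
  change ψ.1 g = 0
  induction hg using Subgroup.closure_induction with
  | mem g hg => exact hψ g hg
  | one => exact funext (cocycle_one ψ)
  | mul g h _ _ hg hh => exact funext fun x => by simp [cocycle_mul, hg, hh]
  | inv g _ hg =>
    refine funext fun x => ?_
    simpa [cocycle_one, hg] using (cocycle_mul ψ g g⁻¹ x).symm

variable (K G X) in
/-- The coboundary map from functions on `X` to 1-cocycles. -/
def coboundary : (X → K) →ₗ[K] functionCocycles K G X where
  toFun f := ⟨fun g x => f (g • x) - f x, fun g h x => by simp only [mul_smul]; ring⟩
  map_add' f f' := by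
    ext g x
    simp only [Pi.add_apply, Submodule.coe_add]
    ring
  map_smul' c f := by
    ext g x
    simp [mul_sub]

lemma coboundary_apply (f : X → K) (g : G) (x : X) :
    (coboundary K G X f).1 g x = f (g • x) - f x :=
  rfl

lemma mem_ker_coboundary {f : X → K} :
    f ∈ LinearMap.ker (coboundary K G X) ↔ ∀ (g : G) x, f (g • x) = f x := by
  simp only [LinearMap.mem_ker, Subtype.ext_iff, funext_iff, coboundary_apply,
    ZeroMemClass.coe_zero, Pi.zero_apply, sub_eq_zero]

lemma finrank_le_one_of_forall_eq [Nonempty X] {V : Submodule K (X → K)}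
    (hV : ∀ f ∈ V, ∀ x y, f x = f y) : Module.finrank K V ≤ 1 := by
  let x₀ : X := Classical.arbitrary X
  let evalAt : V →ₗ[K] K := (LinearMap.proj x₀).comp V.subtype
  have hinj : Function.Injective evalAt := fun f g hfg =>
    Subtype.ext (funext fun y => (hV f f.2 y x₀).trans (hfg.trans (hV g g.2 x₀ y)))
  simpa using LinearMap.finrank_le_finrank_of_injective hinj

variable (K G X) in
lemma finrank_range_coboundary_add_one [Finite X] [Nonempty X] [MulAction.IsPretransitive G X] :
    Module.finrank K (LinearMap.range (coboundary K G X)) + 1 = Nat.card X := by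
  have := Fintype.ofFinite X
  have hle : Module.finrank K (LinearMap.ker (coboundary K G X)) ≤ 1 := by
    refine finrank_le_one_of_forall_eq fun f hf x y => ?_
    obtain ⟨g, rfl⟩ := MulAction.exists_smul_eq G x y
    exact (mem_ker_coboundary.mp hf g x).symm
  have hpos : 0 < Module.finrank K (LinearMap.ker (coboundary K G X)) := by
    rw [Module.finrank_pos_iff_exists_ne_zero]
    refine ⟨⟨fun _ => 1, mem_ker_coboundary.mpr fun _ _ => rfl⟩, fun h => ?_⟩
    exact one_ne_zero (congrFun (congrArg Subtype.val h) (Classical.arbitrary X))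
  have hrank := LinearMap.finrank_range_add_finrank_ker (coboundary K G X)
  rw [Module.finrank_fintype_fun_eq_card, ← Nat.card_eq_fintype_card] at hrank
  omega

end CocyclesOfActions

section Shapiro

variable {K G : Type*} [Field K] [Group G] (H : Subgroup G)

lemma out_smul_one_eq (q : G ⧸ H) : q.out • ((1 : G) : G ⧸ H) = q := by
  rw [MulAction.Quotient.smul_coe, smul_eq_mul, mul_one, QuotientGroup.out_eq']

lemma smul_one_eq_iff {g : G} : g • ((1 : G) : G ⧸ H) = (1 : G) ↔ g ∈ H := by
  rw [MulAction.Quotient.smul_coe, smul_eq_mul, mul_one, eq_comm, QuotientGroup.eq, inv_one,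
    one_mul]

/-- The Schreier element of `H` by which `g` moves the chosen representative of the coset `q`. -/
noncomputable def schreierElement (g : G) (q : G ⧸ H) : H :=
  ⟨(g • q).out⁻¹ * g * q.out, by
    rw [← smul_one_eq_iff, mul_smul, mul_smul, out_smul_one_eq, inv_smul_eq_iff, out_smul_one_eq]⟩

lemma out_mul_schreierElement (g : G) (q : G ⧸ H) :
    (g • q).out * schreierElement H g q = g * q.out := by
  simp [schreierElement, mul_assoc]

lemma schreierElement_mul (g h : G) (q : G ⧸ H) :
    schreierElement H (g * h) q = schreierElement H g (h • q) * schreierElement H h q := by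
  ext
  simp [schreierElement, mul_smul, mul_assoc]

lemma map_schreierElement_one (χ : Additive H →+ K) (h : H) :
    χ (.ofMul (schreierElement H h (1 : G))) = χ (.ofMul h) := by
  have hout : ((1 : G) : G ⧸ H).out ∈ H := (smul_one_eq_iff H).mp (out_smul_one_eq H _)
  have hconj : (⟨_, hout⟩ : H) * schreierElement H h (1 : G) = h * ⟨_, hout⟩ := by
    ext
    simpa [(smul_one_eq_iff H).mpr h.2] using out_mul_schreierElement H (h : G) (1 : G)
  have hχ := congrArg (fun k : H => χ (.ofMul k)) hconj
  simpa [add_comm] using hχ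

variable (K) in
/-- Evaluation of cocycles at the base coset, the map inducing Shapiro's isomorphism
`H¹(G, K^(G ⧸ H)) ≃ Hom(H, K)`. -/
def evalBaseCoset : functionCocycles K G (G ⧸ H) →ₗ[K] (Additive H →+ K) where
  toFun ψ := AddMonoidHom.mk' (fun h => ψ.1 (h.toMul : G) (1 : G)) fun a b => by
    simp [cocycle_mul, (smul_one_eq_iff H).mpr b.toMul.2]
  map_add' _ _ := rfl
  map_smul' _ _ := rfl

lemma evalBaseCoset_surjective : Function.Surjective (evalBaseCoset K H) := fun χ =>
  ⟨⟨fun g q => χ (.ofMul (schreierElement H g q)), fun g h q => by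
    simp only [schreierElement_mul, ofMul_mul, map_add]⟩,
  AddMonoidHom.ext fun h => map_schreierElement_one H χ h⟩

lemma ker_evalBaseCoset :
    LinearMap.ker (evalBaseCoset K H) = LinearMap.range (coboundary K G (G ⧸ H)) := by
  ext ψ
  rw [LinearMap.mem_ker, LinearMap.mem_range]
  constructor
  · intro hψ
    have hψH (h : H) : ψ.1 h (1 : G) = 0 := DFunLike.congr_fun hψ (.ofMul h)
    refine ⟨fun q => ψ.1 q.out (1 : G), Subtype.ext (funext₂ fun g q => ?_)⟩
    have hout := congrArg (fun k => ψ.1 k ((1 : G) : G ⧸ H)) (out_mul_schreierElement H g q)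
    simp only [cocycle_mul, hψH, out_smul_one_eq, add_zero,
      (smul_one_eq_iff H).mpr (schreierElement H g q).2] at hout
    rw [coboundary_apply, hout, add_sub_cancel_right]
  · rintro ⟨f, rfl⟩
    ext h
    exact sub_eq_zero.mpr (congrArg f ((smul_one_eq_iff H).mpr h.2))

variable (K) in
lemma finrank_functionCocycles_add_one [H.FiniteIndex]
    [FiniteDimensional K (functionCocycles K G (G ⧸ H))] :
    Module.finrank K (functionCocycles K G (G ⧸ H)) + 1 =
      Module.finrank K (Additive H →+ K) + H.index := by
  have hrank := LinearMap.finrank_range_add_finrank_ker (evalBaseCoset K H)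
  rw [LinearMap.range_eq_top.mpr (evalBaseCoset_surjective H), finrank_top,
    ker_evalBaseCoset] at hrank
  rw [← hrank, add_assoc, finrank_range_coboundary_add_one, Subgroup.index]

lemma betti1_eq_finrank_addMonoidHom : betti1 H = Module.finrank ℚ (Additive H →+ ℚ) := by
  let precompOf : (Additive (Abelianization H) →+ ℚ) →ₗ[ℚ] (Additive H →+ ℚ) :=
    { toFun := fun f => f.comp (MonoidHom.toAdditive Abelianization.of)
      map_add' := fun _ _ => rfl
      map_smul' := fun _ _ => rfl }
  have hbij : Function.Bijective precompOf := by
    have hof : Function.Surjective (MonoidHom.toAdditive (Abelianization.of (G := H))) :=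
      QuotientGroup.mk_surjective (s := commutator H)
    exact ⟨fun _ _ hff' => (AddMonoidHom.cancel_right hof).mp hff', fun χ =>
      ⟨MonoidHom.toAdditiveLeft
        (Abelianization.lift (AddMonoidHom.toMultiplicativeRight χ)), rfl⟩⟩
  rw [betti1, ← Subspace.dual_finrank_eq,
    ← (LinearMap.liftBaseChangeEquiv (R := ℤ) (M := Additive (Abelianization H)) ℚ).finrank_eq,
    ← (addMonoidHomLequivInt ℚ).finrank_eq, (LinearEquiv.ofBijective precompOf hbij).finrank_eq]

end Shapiro

section NormsOfPermutations

variable {K X : Type*} [Field K]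

variable (K) in
/-- The operator `1 + x + ⋯ + x ^ (k - 1)` on functions, the norm of the cyclic group generated by
`x` when `x ^ k = 1`. -/
def permNorm (k : ℕ) (x : Equiv.Perm X) : (X → K) →ₗ[K] (X → K) :=
  ∑ j ∈ Finset.range k, LinearMap.funLeft K K ⇑(x ^ j : Equiv.Perm X)

lemma permNorm_apply (k : ℕ) (x : Equiv.Perm X) (v : X → K) (a : X) :
    permNorm K k x v a = ∑ j ∈ Finset.range k, v ((x ^ j) a) := by
  simp [permNorm, LinearMap.funLeft_apply]

lemma permNorm_succ_apply (k : ℕ) (x : Equiv.Perm X) (v : X → K) (a : X) :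
    permNorm K (k + 1) x v a = permNorm K k x v a + v ((x ^ k) a) := by
  simp only [permNorm_apply, Finset.sum_range_succ]

lemma permNorm_apply_apply {k : ℕ} {x : Equiv.Perm X} (hx : x ^ k = 1) (v : X → K) (a : X) :
    permNorm K k x v (x a) = permNorm K k x v a := by
  have hshift := Finset.sum_range_succ' (fun j => v ((x ^ j) a)) k
  rw [Finset.sum_range_succ, hx, pow_zero] at hshift
  simpa only [permNorm_apply, pow_succ, Equiv.Perm.mul_apply] using
    (add_right_cancel hshift).symm

lemma mem_range_permNorm [CharZero K] {k : ℕ} (hk : 0 < k) {x : Equiv.Perm X} (hx : x ^ k = 1)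
    {f : X → K} : f ∈ LinearMap.range (permNorm K k x) ↔ ∀ a, f (x a) = f a := by
  constructor
  · rintro ⟨v, rfl⟩
    exact permNorm_apply_apply hx v
  · intro hf
    refine ⟨(k : K)⁻¹ • f, funext fun a => ?_⟩
    have hpow (j : ℕ) : f ((x ^ j) a) = f a := (apply_eq_of_sameCycle hf ⟨j, by simp⟩).symm
    have hk' : (k : K) ≠ 0 := Nat.cast_ne_zero.mpr hk.ne'
    simp [permNorm_apply, hpow, hk']

lemma finrank_range_permNorm [CharZero K] [Finite X] {k : ℕ} (hk : 0 < k) {x : Equiv.Perm X}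
    (hx : x ^ k = 1) : Module.finrank K (LinearMap.range (permNorm K k x)) = numCycles x := by
  have := Fintype.ofFinite (Quotient (Equiv.Perm.SameCycle.setoid x))
  let e : (Quotient (Equiv.Perm.SameCycle.setoid x) → K) ≃ₗ[K]
      LinearMap.range (permNorm K k x) :=
    { toEquiv := (invariantFunctionEquiv K x).symm.trans
        (Equiv.subtypeEquivRight fun _ => (mem_range_permNorm hk hx).symm)
      map_add' := fun _ _ => rfl
      map_smul' := fun _ _ => rfl }
  rw [← e.finrank_eq, Module.finrank_fintype_fun_eq_card, numCycles, Nat.card_eq_fintype_card]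

variable {ι : Type*} {p : ι → ℕ} {x : ι → Equiv.Perm X}

variable (K p x) in
/-- The tuples of functions having the same norm with respect to every permutation of a tuple. -/
def equalNormTuples : Submodule K (ι → X → K) where
  carrier := {v | ∀ i j, permNorm K (p i) (x i) (v i) = permNorm K (p j) (x j) (v j)}
  add_mem' {v w} hv hw i j := by simp only [Pi.add_apply, map_add, hv i j, hw i j]
  zero_mem' i j := by simp only [Pi.zero_apply, map_zero]
  smul_mem' c v hv i j := by simp only [Pi.smul_apply, map_smul, hv i j]

variable (K p x) in
/-- The common norm of an element of `equalNormTuples`, read off at the index `i₀`. -/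
def commonNorm (i₀ : ι) : equalNormTuples K p x →ₗ[K] (X → K) :=
  permNorm K (p i₀) (x i₀) ∘ₗ LinearMap.proj i₀ ∘ₗ (equalNormTuples K p x).subtype

lemma commonNorm_eq (i₀ i : ι) (v : equalNormTuples K p x) :
    commonNorm K p x i₀ v = permNorm K (p i) (x i) (v.1 i) :=
  v.2 i₀ i

/-- Tuples with vanishing common norm can be chosen independently at each index. -/
def kerCommonNormEquiv (i₀ : ι) :
    LinearMap.ker (commonNorm K p x i₀) ≃ₗ[K]
      ((i : ι) → LinearMap.ker (permNorm K (p i) (x i))) where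
  toFun v i := ⟨v.1.1 i, by rw [LinearMap.mem_ker, ← commonNorm_eq i₀, LinearMap.mem_ker.mp v.2]⟩
  invFun w := ⟨⟨fun i => (w i).1, fun i j => by
    rw [LinearMap.mem_ker.mp (w i).2, LinearMap.mem_ker.mp (w j).2]⟩, (w i₀).2⟩
  map_add' _ _ := rfl
  map_smul' _ _ := rfl

variable [CharZero K] [Finite X] [Fintype ι]

lemma finrank_ker_commonNorm_add_sum (hp : ∀ i, 0 < p i) (hx : ∀ i, x i ^ p i = 1) (i₀ : ι) :
    Module.finrank K (LinearMap.ker (commonNorm K p x i₀)) +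
      ∑ i, numCycles (x i) = Fintype.card ι * Nat.card X := by
  have := Fintype.ofFinite X
  have hrank (i : ι) : Module.finrank K (LinearMap.ker (permNorm K (p i) (x i))) +
      numCycles (x i) = Nat.card X := by
    rw [← finrank_range_permNorm (K := K) (hp i) (hx i), add_comm,
      LinearMap.finrank_range_add_finrank_ker, Module.finrank_fintype_fun_eq_card,
      Nat.card_eq_fintype_card]
  rw [(kerCommonNormEquiv i₀).finrank_eq, Module.finrank_pi_fintype, ← Finset.sum_add_distrib]
  simp only [hrank, Finset.sum_const, Finset.card_univ, smul_eq_mul]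

variable (K) in
lemma finrank_equalNormTuples_mem_Icc [Nonempty X] [Nonempty ι] (hp : ∀ i, 0 < p i)
    (hx : ∀ i, x i ^ p i = 1)
    (htrans : ∀ f : X → K, (∀ i a, f (x i a) = f a) → ∀ a b, f a = f b) :
    Module.finrank K (equalNormTuples K p x) + ∑ i, numCycles (x i) ∈
      Set.Icc (Fintype.card ι * Nat.card X) (Fintype.card ι * Nat.card X + 1) := by
  have := Fintype.ofFinite X
  let i₀ : ι := Classical.arbitrary ι
  have hrange : Module.finrank K (LinearMap.range (commonNorm K p x i₀)) ≤ 1 := by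
    refine finrank_le_one_of_forall_eq ?_
    rintro _ ⟨v, rfl⟩
    refine htrans _ fun i a => ?_
    rw [commonNorm_eq i₀ i, permNorm_apply_apply (hx i)]
  have hker := finrank_ker_commonNorm_add_sum (K := K) hp hx i₀
  have hrank := LinearMap.finrank_range_add_finrank_ker (commonNorm K p x i₀)
  rw [Set.mem_Icc]
  omega

end NormsOfPermutations

section SkewPermutations

variable {K G X : Type*} [Field K]

/-- The permutation of `X × K` acting as `x` on `X` and by translation by `v` along the fibres.
The lifts of an action on `X` to an action on `X × K` of this form are the 1-cocycles. -/
def skewPerm (x : Equiv.Perm X) (v : X → K) : Equiv.Perm (X × K) where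
  toFun a := (x a.1, a.2 + v a.1)
  invFun a := (x.symm a.1, a.2 - v (x.symm a.1))
  left_inv a := by simp
  right_inv a := by simp

lemma skewPerm_apply (x : Equiv.Perm X) (v : X → K) (a : X) (t : K) :
    skewPerm x v (a, t) = (x a, t + v a) :=
  rfl

lemma skewPerm_injective (x : Equiv.Perm X) :
    Function.Injective (skewPerm x : (X → K) → Equiv.Perm (X × K)) := fun v w h =>
  funext fun a => by simpa [skewPerm_apply] using congrArg Prod.snd (Equiv.congr_fun h (a, 0))

lemma skewPerm_one_zero : skewPerm 1 (0 : X → K) = 1 := by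
  ext ⟨a, t⟩ <;> simp [skewPerm_apply]

lemma skewPerm_mul_skewPerm (x y : Equiv.Perm X) (v w : X → K) :
    skewPerm x v * skewPerm y w = skewPerm (x * y) (v ∘ y + w) := by
  ext ⟨a, t⟩
  · rfl
  · simp only [Equiv.Perm.mul_apply, skewPerm_apply, Pi.add_apply, Function.comp_apply]
    ring

lemma inv_skewPerm (x : Equiv.Perm X) (v : X → K) :
    (skewPerm x v)⁻¹ = skewPerm x⁻¹ (-(v ∘ ⇑x⁻¹)) := by
  rw [inv_eq_iff_mul_eq_one, skewPerm_mul_skewPerm, mul_inv_cancel, add_neg_cancel,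
    skewPerm_one_zero]

lemma skewPerm_pow (x : Equiv.Perm X) (v : X → K) (k : ℕ) :
    skewPerm x v ^ k = skewPerm (x ^ k) (permNorm K k x v) := by
  induction k with
  | zero => simp [permNorm, skewPerm_one_zero]
  | succ k ih =>
    rw [pow_succ', ih, skewPerm_mul_skewPerm, ← pow_succ']
    congr 1
    ext a
    simp [permNorm_succ_apply, add_comm]

variable [Group G] [MulAction G X]

lemma exists_cocycle_of_skewPerm {S : Set G} (hS : Subgroup.closure S = ⊤)
    {φ : G →* Equiv.Perm (X × K)}
    (hφ : ∀ g ∈ S, ∃ v, φ g = skewPerm (MulAction.toPerm g) v) :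
    ∃ ψ : functionCocycles K G X, ∀ g, φ g = skewPerm (MulAction.toPerm g) (ψ.1 g) := by
  have hskew (g : G) : ∃ v, φ g = skewPerm (MulAction.toPermHom G X g) v := by
    have hg : g ∈ Subgroup.closure S := hS ▸ Subgroup.mem_top g
    induction hg using Subgroup.closure_induction with
    | mem g hg => exact hφ g hg
    | one => exact ⟨0, by rw [map_one, map_one, skewPerm_one_zero]⟩
    | mul g h _ _ hg hh =>
      obtain ⟨v, hv⟩ := hg
      obtain ⟨w, hw⟩ := hh
      exact ⟨_, by rw [map_mul, map_mul, hv, hw, skewPerm_mul_skewPerm]⟩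
    | inv g _ hg =>
      obtain ⟨v, hv⟩ := hg
      exact ⟨_, by rw [map_inv, map_inv, hv, inv_skewPerm]⟩
  choose ψ hψ using hskew
  refine ⟨⟨ψ, fun g h x => ?_⟩, hψ⟩
  have hmul : ψ (g * h) = ψ g ∘ MulAction.toPermHom G X h + ψ h := by
    refine skewPerm_injective (MulAction.toPermHom G X (g * h)) ?_
    rw [← hψ, map_mul, map_mul, hψ g, hψ h, skewPerm_mul_skewPerm]
  exact congrFun hmul x

lemma cocycle_pow (ψ : functionCocycles K G X) (g : G) (k : ℕ) :
    ψ.1 (g ^ k) = permNorm K k (MulAction.toPerm g) (ψ.1 g) := by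
  induction k with
  | zero =>
    ext x
    simp [permNorm, cocycle_one]
  | succ k ih =>
    ext x
    rw [pow_succ', cocycle_mul, ih, permNorm_succ_apply, add_comm]
    exact congrArg (_ + ψ.1 g ·) (Equiv.congr_fun (map_pow (MulAction.toPermHom G X) g k) x)

end SkewPermutations

section TorusKnotGroup

variable {m : ℕ} {p : Fin m → ℕ}

variable (m p) in
/-- The generator `x_i` of `Γ_{p_1,…,p_m}`. -/
def torusGen (i : Fin m) : TorusKnotGroup m p :=
  PresentedGroup.of i

variable (m p) in
lemma closure_range_torusGen : Subgroup.closure (Set.range (torusGen m p)) = ⊤ :=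
  PresentedGroup.closure_range_of (torusRels m p)

lemma torusGen_pow_eq (i j : Fin m) : torusGen m p i ^ p i = torusGen m p j ^ p j := by
  have hrel : PresentedGroup.mk (torusRels m p) (FreeGroup.of i ^ p i * (FreeGroup.of j ^ p j)⁻¹) =
      1 := PresentedGroup.one_of_mem ⟨i, j, rfl⟩
  rwa [map_mul, map_inv, mul_inv_eq_one, map_pow, map_pow] at hrel

lemma torusGen_pow_mem_center (i : Fin m) :
    torusGen m p i ^ p i ∈ Subgroup.center (TorusKnotGroup m p) := by
  rw [← Subgroup.centralizer_univ, ← Subgroup.coe_top, ← closure_range_torusGen m p,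
    Subgroup.centralizer_closure, Subgroup.mem_centralizer_iff]
  rintro _ ⟨j, rfl⟩
  rw [torusGen_pow_eq i j]
  exact Commute.self_pow _ _

lemma lift_eq_one_of_mem_torusRels {A : Type*} [Group A] {y : Fin m → A}
    (hy : ∀ i j, y i ^ p i = y j ^ p j) : ∀ r ∈ torusRels m p, FreeGroup.lift y r = 1 := by
  rintro _ ⟨i, j, rfl⟩
  simp [hy i j]

/-- The homomorphism from `Γ_{p_1,…,p_m}` prescribed on the generators. -/
def torusLift {A : Type*} [Group A] (y : Fin m → A) (hy : ∀ i j, y i ^ p i = y j ^ p j) :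
    TorusKnotGroup m p →* A :=
  PresentedGroup.toGroup (lift_eq_one_of_mem_torusRels hy)

lemma torusLift_torusGen {A : Type*} [Group A] {y : Fin m → A}
    (hy : ∀ i j, y i ^ p i = y j ^ p j) (i : Fin m) : torusLift y hy (torusGen m p i) = y i :=
  PresentedGroup.toGroup.of _

lemma torusHom_ext {A : Type*} [Group A] {φ ψ : TorusKnotGroup m p →* A}
    (h : ∀ i, φ (torusGen m p i) = ψ (torusGen m p i)) : φ = ψ :=
  PresentedGroup.ext h

variable {K X : Type*} [Field K] [MulAction (TorusKnotGroup m p) X]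

variable (m p K X) in
/-- Evaluation of the cocycles of `Γ_{p_1,…,p_m}` at the generators. -/
def evalTorusGens : functionCocycles K (TorusKnotGroup m p) X →ₗ[K]
    equalNormTuples K p fun i => MulAction.toPermHom (TorusKnotGroup m p) X (torusGen m p i) where
  toFun ψ := ⟨fun i => ψ.1 (torusGen m p i), fun i j =>
    (cocycle_pow ψ _ _).symm.trans
      ((congrArg ψ.1 (torusGen_pow_eq i j)).trans (cocycle_pow ψ _ _))⟩
  map_add' _ _ := rfl
  map_smul' _ _ := rfl

lemma evalTorusGens_injective : Function.Injective (evalTorusGens m p K X) := by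
  rw [← LinearMap.ker_eq_bot, LinearMap.ker_eq_bot']
  intro ψ hψ
  refine cocycle_eq_zero_of_closure_eq_top (closure_range_torusGen m p) ?_
  rintro _ ⟨i, rfl⟩
  exact congrFun (congrArg Subtype.val hψ) i

lemma evalTorusGens_surjective : Function.Surjective (evalTorusGens m p K X) := by
  rintro ⟨v, hv⟩
  let y (i : Fin m) := skewPerm (MulAction.toPermHom (TorusKnotGroup m p) X (torusGen m p i)) (v i)
  have hy (i j : Fin m) : y i ^ p i = y j ^ p j := by
    rw [skewPerm_pow, skewPerm_pow, ← map_pow, ← map_pow, torusGen_pow_eq i j]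
    exact congrArg _ (hv i j)
  have hskew : ∀ g ∈ Set.range (torusGen m p),
      ∃ w : X → K, torusLift y hy g = skewPerm (MulAction.toPerm g) w := by
    rintro _ ⟨i, rfl⟩
    exact ⟨v i, torusLift_torusGen hy i⟩
  obtain ⟨ψ, hψ⟩ := exists_cocycle_of_skewPerm (closure_range_torusGen m p) hskew
  refine ⟨ψ, Subtype.ext (funext fun i => ?_)⟩
  refine skewPerm_injective (MulAction.toPermHom (TorusKnotGroup m p) X (torusGen m p i)) ?_
  exact (hψ (torusGen m p i)).symm.trans (torusLift_torusGen hy i)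

/-- The permutation by which the generator `x_i` acts on the cosets of `H`. -/
def cosetGenPerm (H : Subgroup (TorusKnotGroup m p)) (i : Fin m) :
    Equiv.Perm (TorusKnotGroup m p ⧸ H) :=
  MulAction.toPermHom _ _ (torusGen m p i)

lemma cosetGenPerm_pow {H : Subgroup (TorusKnotGroup m p)} {i : Fin m}
    (hz : torusGen m p i ^ p i ∈ H) : cosetGenPerm H i ^ p i = 1 := by
  rw [cosetGenPerm, ← map_pow]
  ext q
  induction q using QuotientGroup.induction_on with | H g =>
  change ((torusGen m p i ^ p i * g : TorusKnotGroup m p) : TorusKnotGroup m p ⧸ H) = g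
  rwa [← (Subgroup.mem_center_iff.mp (torusGen_pow_mem_center i) g), QuotientGroup.mk_mul_of_mem]

lemma apply_eq_of_cosetGenPerm_invariant {α : Type*} {H : Subgroup (TorusKnotGroup m p)}
    {f : TorusKnotGroup m p ⧸ H → α} (hf : ∀ i q, f (cosetGenPerm H i q) = f q)
    (q r : TorusKnotGroup m p ⧸ H) : f q = f r := by
  have hinv (g : TorusKnotGroup m p) (q) : f (g • q) = f q := by
    have hg : g ∈ Subgroup.closure (Set.range (torusGen m p)) :=
      closure_range_torusGen m p ▸ Subgroup.mem_top g
    induction hg using Subgroup.closure_induction generalizing q with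
    | mem _ hg =>
      obtain ⟨i, rfl⟩ := hg
      exact hf i q
    | one => rw [one_smul]
    | mul g h _ _ hg hh => rw [mul_smul, hg, hh]
    | inv g _ hg => rw [← hg, smul_inv_smul]
  obtain ⟨g, rfl⟩ := MulAction.exists_smul_eq (TorusKnotGroup m p) q r
  exact (hinv g q).symm

lemma betti1_add_index_add_sum_numCycles_mem_Icc (hm : 0 < m) (hp : ∀ i, 0 < p i)
    {H : Subgroup (TorusKnotGroup m p)} [H.FiniteIndex] (hz : ∀ i, torusGen m p i ^ p i ∈ H) :
    betti1 H + H.index + ∑ i, numCycles (cosetGenPerm H i) ∈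
      Set.Icc (m * H.index + 1) (m * H.index + 2) := by
  have : Nonempty (Fin m) := ⟨⟨0, hm⟩⟩
  let e : functionCocycles ℚ (TorusKnotGroup m p) (TorusKnotGroup m p ⧸ H) ≃ₗ[ℚ]
      equalNormTuples ℚ p (cosetGenPerm H) :=
    LinearEquiv.ofBijective (evalTorusGens m p ℚ (TorusKnotGroup m p ⧸ H))
      ⟨evalTorusGens_injective, evalTorusGens_surjective⟩
  have := FiniteDimensional.of_injective e.toLinearMap e.injective
  have hcocycles := finrank_functionCocycles_add_one ℚ H
  have htuples := finrank_equalNormTuples_mem_Icc ℚ (x := cosetGenPerm H) hp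
    (fun i => cosetGenPerm_pow (hz i)) fun _ => apply_eq_of_cosetGenPerm_invariant
  rw [e.finrank_eq, ← betti1_eq_finrank_addMonoidHom] at hcocycles
  rw [Fintype.card_fin, ← Subgroup.index, Set.mem_Icc] at htuples
  rw [Set.mem_Icc]
  omega

end TorusKnotGroup

section CentralElements

variable {G A : Type*} [Group G] [Group A]

variable (G A) in
lemma finite_monoidHom_of_fg [Group.FG G] [Finite A] : Finite (G →* A) := by
  obtain ⟨S, -, hS⟩ := Group.rank_spec G
  exact Finite.of_injective (fun (f : G →* A) (s : S) => f s) fun f g hfg =>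
    MonoidHom.eq_of_eqOn_dense hS fun x hx => congrFun hfg ⟨x, hx⟩

variable (G A) in
lemma card_monoidHom_le [Group.FG G] [Finite A] :
    Nat.card (G →* A) ≤ Nat.card A ^ Group.rank G := by
  obtain ⟨S, hcard, hS⟩ := Group.rank_spec G
  have hle := Nat.card_le_card_of_injective (fun (f : G →* A) (s : S) => f s) fun f g hfg =>
    MonoidHom.eq_of_eqOn_dense hS fun x hx => congrFun hfg ⟨x, hx⟩
  rwa [Nat.card_fun, Nat.card_eq_fintype_card (α := S), Fintype.card_coe, hcard] at hle

variable (G) in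
lemma finite_subgroups_of_index [Group.FG G] {n : ℕ} (hn : n ≠ 0) :
    Finite {H : Subgroup G // H.index = n} := by
  have := finite_monoidHom_of_fg G (Equiv.Perm (Fin n))
  have labelling (H : {H : Subgroup G // H.index = n}) : Nonempty (G ⧸ H.1 ≃ Fin n) := by
    have : Finite (G ⧸ H.1) := Nat.finite_of_card_ne_zero (H.2.trans_ne hn)
    exact Finite.card_eq.mp (H.2.trans (Nat.card_fin n).symm)
  refine Finite.of_injective (fun H => pointedCosetHom G (Fin n) ⟨H.1, (labelling H).some⟩) ?_
  intro H K hHK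
  exact Subtype.ext (congrArg Sigma.fst (pointedCosetHom_injective hHK))

lemma finite_subgroups_of_index_and [Group.FG G] {n : ℕ} (hn : n ≠ 0) (P : Subgroup G → Prop) :
    Finite {H : Subgroup G // H.index = n ∧ P H} :=
  have := finite_subgroups_of_index G hn
  Finite.of_injective _
    (Subtype.impEmbedding _ (fun H : Subgroup G => H.index = n) fun _ => And.left).injective

lemma card_subgroups_mono [Group.FG G] {n : ℕ} (hn : n ≠ 0) {P Q : Subgroup G → Prop}
    (hPQ : ∀ H, H.index = n → P H → Q H) :
    Nat.card {H : Subgroup G // H.index = n ∧ P H} ≤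
      Nat.card {H : Subgroup G // H.index = n ∧ Q H} :=
  have := finite_subgroups_of_index_and hn Q
  Nat.card_le_card_of_injective _
    (Subtype.impEmbedding (fun H : Subgroup G => H.index = n ∧ P H) (fun H => H.index = n ∧ Q H)
      fun H hH => ⟨hH.1, hPQ H hH.1 hH.2⟩).injective

variable {z : G} {H : Subgroup G}

lemma normal_of_sup_zpowers_eq_top (hz : z ∈ Subgroup.center G)
    (hH : H ⊔ Subgroup.zpowers z = ⊤) : H.Normal := by
  rw [← Subgroup.normalizer_eq_top_iff, eq_top_iff, ← hH, sup_le_iff, Subgroup.zpowers_le]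
  exact ⟨Subgroup.le_normalizer, Subgroup.center_le_normalizer _ hz⟩

lemma isCyclic_quotient_of_sup_zpowers_eq_top [H.Normal] (hH : H ⊔ Subgroup.zpowers z = ⊤) :
    IsCyclic (G ⧸ H) := by
  have htop := congrArg (Subgroup.map (QuotientGroup.mk' H)) hH
  rw [Subgroup.map_sup, QuotientGroup.map_mk'_self, bot_sup_eq, MonoidHom.map_zpowers,
    Subgroup.map_top_of_surjective _ (QuotientGroup.mk'_surjective H)] at htop
  exact isCyclic_iff_exists_zpowers_eq_top.mpr ⟨_, htop⟩

lemma exists_ker_eq_of_sup_zpowers_eq_top (hz : z ∈ Subgroup.center G)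
    (hH : H ⊔ Subgroup.zpowers z = ⊤) : ∃ f : G →* Multiplicative (ZMod H.index), f.ker = H := by
  have := normal_of_sup_zpowers_eq_top hz hH
  have hcyclic := isCyclic_quotient_of_sup_zpowers_eq_top hH
  rw [Subgroup.index]
  refine ⟨(zmodCyclicMulEquiv hcyclic).symm.toMonoidHom.comp (QuotientGroup.mk' H), ?_⟩
  ext g
  simp

lemma exists_ker_eq_subgroupOf {K : Subgroup G} (hz : z ∈ Subgroup.center G)
    (hH : H ⊔ Subgroup.zpowers z = K) :
    ∃ f : K →* Multiplicative (ZMod (H.relIndex K)), f.ker = H.subgroupOf K := by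
  have hHK : H ≤ K := le_sup_left.trans hH.le
  have hzK : z ∈ K := hH.le (Subgroup.mem_sup_right (Subgroup.mem_zpowers z))
  refine exists_ker_eq_of_sup_zpowers_eq_top (z := ⟨z, hzK⟩) ?_ ?_
  · exact Subgroup.mem_center_iff.mpr fun g => Subtype.ext (Subgroup.mem_center_iff.mp hz g)
  · refine Subgroup.map_injective K.subtype_injective ?_
    rw [Subgroup.map_sup, MonoidHom.map_zpowers, Subgroup.map_subgroupOf_eq_of_le hHK,
      ← MonoidHom.range_eq_map, Subgroup.range_subtype]
    exact hH

lemma index_sup_zpowers_mem_Icc (hH : H.index ≠ 0) (hz : z ∉ H) :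
    (H ⊔ Subgroup.zpowers z).index ∈ Finset.Icc 1 (H.index / 2) := by
  set K := H ⊔ Subgroup.zpowers z
  have hprod : H.relIndex K * K.index = H.index := Subgroup.relIndex_mul_index le_sup_left
  have hone : H.relIndex K ≠ 1 := fun h =>
    hz (Subgroup.relIndex_eq_one.mp h (Subgroup.mem_sup_right (Subgroup.mem_zpowers z)))
  have hrel : H.relIndex K ≠ 0 := left_ne_zero_of_mul (hprod.trans_ne hH)
  have hK : K.index ≠ 0 := right_ne_zero_of_mul (hprod.trans_ne hH)
  rw [Finset.mem_Icc, Nat.one_le_iff_ne_zero, Nat.le_div_iff_mul_le two_pos, ← hprod, mul_comm]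
  exact ⟨hK, Nat.mul_le_mul_right _ (by omega)⟩

variable [Group.FG G]

lemma card_monoidHom_zmod_le (K : Subgroup G) [K.FiniteIndex] {k : ℕ} [NeZero k] :
    Nat.card (K →* Multiplicative (ZMod k)) ≤ 2 ^ (Group.rank G * (k * K.index)) := by
  have := Subgroup.fg_of_index_ne_zero K
  calc Nat.card (K →* Multiplicative (ZMod k)) ≤ k ^ Group.rank K := by
        simpa using card_monoidHom_le K (Multiplicative (ZMod k))
    _ ≤ k ^ (K.index * Group.rank G) :=
        Nat.pow_le_pow_right (NeZero.pos k) (Subgroup.rank_le_index_mul_rank K)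
    _ ≤ (2 ^ k) ^ (K.index * Group.rank G) := Nat.pow_le_pow_left Nat.lt_two_pow_self.le _
    _ = 2 ^ (Group.rank G * (k * K.index)) := by rw [← pow_mul]; ring_nf

lemma card_subgroups_sup_zpowers_eq_le (hz : z ∈ Subgroup.center G) {n : ℕ} (hn : n ≠ 0)
    (K : Subgroup G) :
    Nat.card {H : Subgroup G // H.index = n ∧ H ⊔ Subgroup.zpowers z = K} ≤
      2 ^ (Group.rank G * n) := by
  obtain hempty | ⟨⟨H₀, hH₀, hsup₀⟩⟩ :=
    isEmpty_or_nonempty {H : Subgroup G // H.index = n ∧ H ⊔ Subgroup.zpowers z = K}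
  · simp
  have hle {H : Subgroup G} (hH : H ⊔ Subgroup.zpowers z = K) : H ≤ K := le_sup_left.trans hH.le
  have hindex {H : Subgroup G} (hH : H.index = n ∧ H ⊔ Subgroup.zpowers z = K) :
      H.relIndex K * K.index = n := (Subgroup.relIndex_mul_index (hle hH.2)).trans hH.1
  have hprod := hindex ⟨hH₀, hsup₀⟩
  have : K.FiniteIndex := ⟨right_ne_zero_of_mul (hprod.trans_ne hn)⟩
  have : NeZero (H₀.relIndex K) := ⟨left_ne_zero_of_mul (hprod.trans_ne hn)⟩
  have := Subgroup.fg_of_index_ne_zero K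
  have := finite_monoidHom_of_fg K (Multiplicative (ZMod (H₀.relIndex K)))
  have hchar (H : {H : Subgroup G // H.index = n ∧ H ⊔ Subgroup.zpowers z = K}) :
      ∃ f : K →* Multiplicative (ZMod (H₀.relIndex K)), f.ker = H.1.subgroupOf K := by
    rw [← Nat.eq_of_mul_eq_mul_right (Nat.pos_of_ne_zero Subgroup.FiniteIndex.index_ne_zero)
      ((hindex H.2).trans hprod.symm)]
    exact exists_ker_eq_subgroupOf hz H.2.2
  choose χ hχ using hchar
  have hinj : Function.Injective χ := fun H H' hHH' => by
    have hof : H.1.subgroupOf K = H'.1.subgroupOf K := by rw [← hχ, ← hχ, hHH']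
    exact Subtype.ext <| by
      rw [← Subgroup.map_subgroupOf_eq_of_le (hle H.2.2), hof,
        Subgroup.map_subgroupOf_eq_of_le (hle H'.2.2)]
  refine (Nat.card_le_card_of_injective χ hinj).trans ((card_monoidHom_zmod_le K).trans_eq ?_)
  rw [hprod]

lemma card_subgroups_notMem_le (hz : z ∈ Subgroup.center G) {n : ℕ} (hn : n ≠ 0) :
    Nat.card {H : Subgroup G // H.index = n ∧ z ∉ H} ≤ 2 ^ (Group.rank G * n) *
      ∑ N ∈ Finset.Icc 1 (n / 2), Nat.card {K : Subgroup G // K.index = N ∧ z ∈ K} := by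
  have hfib (K : Subgroup G) : Finite {H : Subgroup G // H.index = n ∧
      H ⊔ Subgroup.zpowers z = K} := finite_subgroups_of_index_and hn _
  have hbase (N : Finset.Icc 1 (n / 2)) : Finite {K : Subgroup G // K.index = N ∧ z ∈ K} :=
    finite_subgroups_of_index_and (Nat.one_le_iff_ne_zero.mp (Finset.mem_Icc.mp N.2).1) _
  have hmem (H : {H : Subgroup G // H.index = n ∧ z ∉ H}) :
      (H.1 ⊔ Subgroup.zpowers z).index ∈ Finset.Icc 1 (n / 2) := by
    simpa only [H.2.1] using index_sup_zpowers_mem_Icc (H.2.1.trans_ne hn) H.2.2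
  let saturate (H : {H : Subgroup G // H.index = n ∧ z ∉ H}) :
      Σ N : Finset.Icc 1 (n / 2), Σ K : {K : Subgroup G // K.index = N ∧ z ∈ K},
        {H : Subgroup G // H.index = n ∧ H ⊔ Subgroup.zpowers z = K} :=
    ⟨⟨_, hmem H⟩,
      ⟨H.1 ⊔ Subgroup.zpowers z, rfl, Subgroup.mem_sup_right (Subgroup.mem_zpowers z)⟩,
      ⟨H.1, H.2.1, rfl⟩⟩
  have saturate_injective : Function.Injective saturate := fun H H' h =>
    Subtype.ext (congrArg (fun a => a.2.2.1) h)
  refine (Nat.card_le_card_of_injective saturate saturate_injective).trans ?_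
  rw [Nat.card_sigma, Finset.mul_sum, ← Finset.sum_coe_sort (Finset.Icc 1 (n / 2))]
  refine Finset.sum_le_sum fun N _ => ?_
  let _ := Fintype.ofFinite {K : Subgroup G // K.index = N ∧ z ∈ K}
  rw [Nat.card_sigma, Nat.card_eq_fintype_card, ← Finset.card_univ, mul_comm (2 ^ _)]
  exact Finset.sum_le_card_nsmul Finset.univ _ (2 ^ (Group.rank G * n)) fun K _ =>
    card_subgroups_sup_zpowers_eq_le hz hn K.1

end CentralElements

section TorusSubgroupCounts

open scoped Nat Pointwise

variable {m : ℕ} {p : Fin m → ℕ} {n : ℕ}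

instance torusKnotGroup_fg : Group.FG (TorusKnotGroup m p) :=
  Group.fg_iff.mpr ⟨_, closure_range_torusGen m p, Set.finite_range _⟩

variable (m p) in
lemma rank_torusKnotGroup_le : Group.rank (TorusKnotGroup m p) ≤ m := by
  classical
  have hclosure := closure_range_torusGen m p
  rw [← Set.image_univ, ← Finset.coe_univ, ← Finset.coe_image] at hclosure
  exact (Group.rank_le hclosure).trans (Finset.card_image_le.trans_eq (Finset.card_fin m))

lemma card_torusHom_le {A : Type*} [Group A] [Finite A] (S : Fin m → Set A) :
    Nat.card {f : TorusKnotGroup m p →* A // ∀ i, f (torusGen m p i) ∈ S i} ≤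
      ∏ i, Nat.card (S i) := by
  rw [← Nat.card_pi]
  exact Nat.card_le_card_of_injective (fun f i => ⟨f.1 (torusGen m p i), f.2 i⟩) fun f f' h =>
    Subtype.ext (torusHom_ext fun i => congrArg Subtype.val (congrFun h i))

lemma card_torusHom_le_numCycles_le (hn : 0 < n) (c : Fin m → ℝ) :
    (Nat.card {f : TorusKnotGroup m p →* Equiv.Perm (Fin n) //
        ∀ i, c i ≤ numCycles (f (torusGen m p i))} : ℝ) ≤
      (4 ^ n * n !) ^ m * (n : ℝ) ^ (-∑ i, c i) := by
  classical
  have hn' : (0 : ℝ) < n := by exact_mod_cast hn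
  calc (Nat.card {f : TorusKnotGroup m p →* Equiv.Perm (Fin n) //
        ∀ i, c i ≤ numCycles (f (torusGen m p i))} : ℝ)
      ≤ ∏ i, (Nat.card {x : Equiv.Perm (Fin n) | c i ≤ numCycles x} : ℝ) := by
        exact_mod_cast card_torusHom_le fun i => {x : Equiv.Perm (Fin n) | c i ≤ numCycles x}
    _ ≤ ∏ i, (4 ^ n * n ! * (n : ℝ) ^ (-c i)) := by
        refine Finset.prod_le_prod (fun i _ => by positivity) fun i _ => ?_
        have hcount := card_filter_le_numCycles_le (X := Fin n) (by simpa using hn) (c i)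
        rw [Fintype.card_fin] at hcount
        simpa only [Nat.card_eq_fintype_card, Fintype.card_subtype, Set.mem_ofPred_eq] using hcount
    _ = (4 ^ n * n !) ^ m * (n : ℝ) ^ (-∑ i, c i) := by
        rw [Finset.prod_mul_distrib, Finset.prod_const, Finset.card_fin,
          ← Real.rpow_sum_of_pos hn', Finset.sum_neg_distrib]

lemma numCycles_cosetHom_torusGen {X : Type*} (H : Subgroup (TorusKnotGroup m p))
    (e : TorusKnotGroup m p ⧸ H ≃ X) (i : Fin m) :
    numCycles (cosetHom H e (torusGen m p i)) = numCycles (cosetGenPerm H i) :=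
  (numCycles_eq_of_semiconj e fun q => (cosetHom_apply_apply H e _ q).symm).symm

lemma card_subgroups_le_numCycles_mul_factorial_le (hn : 0 < n) (c : Fin m → ℝ) :
    (Nat.card {H : Subgroup (TorusKnotGroup m p) //
        H.index = n ∧ ∀ i, c i ≤ numCycles (cosetGenPerm H i)} : ℝ) * n ! ≤
      (4 ^ n * n !) ^ m * (n : ℝ) ^ (-∑ i, c i) * n := by
  have : Nonempty (Fin n) := ⟨⟨0, hn⟩⟩
  have := finite_monoidHom_of_fg (TorusKnotGroup m p) (Equiv.Perm (Fin n))
  let Q (f : TorusKnotGroup m p →* Equiv.Perm (Fin n)) : Prop :=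
    ∀ i, c i ≤ numCycles (f (torusGen m p i))
  have hcount := card_subgroups_mul_factorial (Fin n) (Q := Q)
    (P := fun H => ∀ i, c i ≤ numCycles (cosetGenPerm H i)) fun H e => by
      simp only [Q, numCycles_cosetHom_torusGen]
  have hdrop : Nat.card {f // IsTransitiveHom f ∧ Q f} ≤ Nat.card {f // Q f} :=
    Nat.card_le_card_of_injective _ (Subtype.impEmbedding _ Q fun _ => And.right).injective
  rw [Nat.card_fin] at hcount
  calc _ = (Nat.card {f // IsTransitiveHom f ∧ Q f} : ℝ) * n := by exact_mod_cast hcount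
    _ ≤ (Nat.card {f // Q f} : ℝ) * n := by gcongr
    _ ≤ _ := by gcongr; exact card_torusHom_le_numCycles_le hn c

lemma card_subgroups_le_numCycles_le (hm : 0 < m) (hn : 0 < n) (c : Fin m → ℝ) :
    (Nat.card {H : Subgroup (TorusKnotGroup m p) //
        H.index = n ∧ ∀ i, c i ≤ numCycles (cosetGenPerm H i)} : ℝ) ≤
      (4 ^ m) ^ n * (n : ℝ) ^ (1 + ((m - 1) * n - ∑ i, c i)) := by
  have hn' : (0 : ℝ) < n := by exact_mod_cast hn
  obtain ⟨k, rfl⟩ := Nat.exists_eq_add_one.mpr hm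
  have hfactorial : (n ! : ℝ) ≤ (n : ℝ) ^ n := by exact_mod_cast Nat.factorial_le_pow n
  refine le_of_mul_le_mul_right ?_ (Nat.cast_pos.mpr n.factorial_pos)
  calc _ ≤ (4 ^ n * n !) ^ (k + 1) * (n : ℝ) ^ (-∑ i, c i) * n :=
        card_subgroups_le_numCycles_mul_factorial_le hn c
    _ = (4 ^ (k + 1)) ^ n * ((n ! : ℝ) ^ k * (n : ℝ) ^ (-∑ i, c i) * n) * n ! := by ring
    _ ≤ (4 ^ (k + 1)) ^ n * (((n : ℝ) ^ n) ^ k * (n : ℝ) ^ (-∑ i, c i) * n) * n ! := by gcongr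
    _ = (4 ^ (k + 1)) ^ n * (n : ℝ) ^ (1 + (((k + 1 : ℕ) - 1) * n - ∑ i, c i)) * n ! := by
        rw [← pow_mul (n : ℝ), ← Real.rpow_natCast (n : ℝ), ← Real.rpow_add hn',
          ← Real.rpow_add_one hn'.ne']
        congr 3
        push_cast
        ring

lemma isTransitiveHom_torusLift {X : Type*} [Fintype X] [DecidableEq X]
    {x : Fin m → Equiv.Perm X} (hx : ∀ i j, x i ^ p i = x j ^ p j) (ht : IsTransitiveTuple x) :
    IsTransitiveHom (torusLift x hx) := by
  classical
  intro a
  let orbit : Finset X := {b | ∃ g, torusLift x hx g a = b}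
  have hstable (i : Fin m) : x i • orbit = orbit := by
    refine Finset.eq_of_subset_of_card_le ?_ (Finset.card_smul_finset _ _).ge
    intro b hb
    obtain ⟨c, hc, rfl⟩ := Finset.mem_smul_finset.mp hb
    obtain ⟨g, rfl⟩ := (Finset.mem_filter_univ _).mp hc
    refine (Finset.mem_filter_univ _).mpr ⟨torusGen m p i * g, ?_⟩
    rw [map_mul, torusLift_torusGen, Equiv.Perm.mul_apply, Equiv.Perm.smul_def]
  have hne : orbit ≠ ∅ :=
    Finset.ne_empty_of_mem (a := a) ((Finset.mem_filter_univ a).mpr ⟨1, by simp⟩)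
  have huniv := (ht orbit hstable).resolve_left hne
  exact fun b => (Finset.mem_filter_univ b).mp (huniv ▸ Finset.mem_univ b)

lemma card_transitiveTuples_le_card_subgroups_mul (hn : 0 < n) :
    Nat.card {x : Fin m → Equiv.Perm (Fin n) // (∀ i, x i ^ p i = 1) ∧ IsTransitiveTuple x} ≤
      Nat.card {H : Subgroup (TorusKnotGroup m p) // H.index = n} * n ! := by
  have : Nonempty (Fin n) := ⟨⟨0, hn⟩⟩
  have := finite_monoidHom_of_fg (TorusKnotGroup m p) (Equiv.Perm (Fin n))
  have hcount := card_subgroups_mul_factorial (G := TorusKnotGroup m p) (Fin n)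
    (P := fun _ => True) (Q := fun _ => True) fun _ _ => Iff.rfl
  simp only [and_true, Nat.card_fin] at hcount
  rw [hcount]
  refine le_trans ?_ (Nat.le_mul_of_pos_right _ hn)
  have hpow {x : Fin m → Equiv.Perm (Fin n)} (hx : ∀ i, x i ^ p i = 1) (i j : Fin m) :
      x i ^ p i = x j ^ p j := (hx i).trans (hx j).symm
  refine Nat.card_le_card_of_injective
    (fun x => ⟨torusLift x.1 (hpow x.2.1), isTransitiveHom_torusLift _ x.2.2⟩) fun x y hxy => ?_
  refine Subtype.ext (funext fun i => ?_)
  rw [← torusLift_torusGen (hpow x.2.1) i, ← torusLift_torusGen (hpow y.2.1) i]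
  exact DFunLike.congr_fun (congrArg Subtype.val hxy) _

end TorusSubgroupCounts

section SubgroupProb

variable {G : Type*} [Group G] [Group.FG G] {n : ℕ} {P Q : Subgroup G → Prop}

lemma subgroupProb_mono (hn : n ≠ 0) (hPQ : ∀ H, H.index = n → P H → Q H) :
    subgroupProb G n P ≤ subgroupProb G n Q :=
  div_le_div_of_nonneg_right (Nat.cast_le.mpr (card_subgroups_mono hn hPQ)) (Nat.cast_nonneg _)

lemma subgroupProb_le_sum {ι : Type*} [Fintype ι] {R : ι → Subgroup G → Prop} (hn : n ≠ 0)
    (hPR : ∀ H, H.index = n → P H → ∃ i, R i H) :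
    subgroupProb G n P ≤ ∑ i, subgroupProb G n (R i) := by
  have (i : ι) := finite_subgroups_of_index_and hn (R i)
  simp only [subgroupProb, ← Finset.sum_div]
  gcongr
  rw [← Nat.cast_sum, ← Nat.card_sigma]
  choose i hi using hPR
  refine Nat.cast_le.mpr (Nat.card_le_card_of_injective
    (fun H => ⟨i H.1 H.2.1 H.2.2, H.1, H.2.1, hi _ _ _⟩) fun H K hHK => ?_)
  exact Subtype.ext (congrArg (fun a : Σ i, {H : Subgroup G // H.index = n ∧ R i H} => a.2.1) hHK)

lemma subgroupProb_or_le (hn : n ≠ 0) :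
    subgroupProb G n (fun H => P H ∨ Q H) ≤ subgroupProb G n P + subgroupProb G n Q := by
  refine (subgroupProb_le_sum (R := ![P, Q]) hn fun H _ hPQ => ?_).trans_eq (Fin.sum_univ_two _)
  exact Fin.exists_fin_two.mpr hPQ

lemma subgroupProb_le_one (hn : n ≠ 0) : subgroupProb G n P ≤ 1 := by
  refine div_le_one_of_le₀ (Nat.cast_le.mpr ?_) (Nat.cast_nonneg _)
  simpa only [and_true] using
    card_subgroups_mono (Q := fun _ => True) hn fun _ _ (_ : P _) => trivial

lemma subgroupProb_not (hn : n ≠ 0) (hne : Nat.card {H : Subgroup G // H.index = n} ≠ 0) :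
    subgroupProb G n (fun H => ¬ P H) = 1 - subgroupProb G n P := by
  classical
  have := finite_subgroups_of_index G hn
  have hsplit : Nat.card {H : Subgroup G // H.index = n} =
      Nat.card {H : Subgroup G // H.index = n ∧ P H} +
        Nat.card {H : Subgroup G // H.index = n ∧ ¬ P H} := by
    have := finite_subgroups_of_index_and hn P
    have := finite_subgroups_of_index_and hn fun H => ¬ P H
    rw [← Nat.card_sum, ← Nat.card_congr (Equiv.sumCompl fun H : {H // H.index = n} => P H.1)]
    exact Nat.card_congr (Equiv.sumCongr (Equiv.subtypeSubtypeEquivSubtypeInter _ P)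
      (Equiv.subtypeSubtypeEquivSubtypeInter _ fun H => ¬ P H))
  rw [eq_sub_iff_add_eq', subgroupProb, subgroupProb, ← add_div, ← Nat.cast_add, ← hsplit,
    div_self (Nat.cast_ne_zero.mpr hne)]

end SubgroupProb

section Asymptotics

open scoped Nat

lemma tendsto_pow_mul_rpow_sub_zero {A δ : ℝ} (Q : ℝ) (hA : 0 < A) (hδ : 0 < δ) :
    Tendsto (fun n : ℕ => A ^ n * (n : ℝ) ^ (Q - δ * n)) atTop (𝓝 0) := by
  have hlog : Tendsto (fun n : ℕ => Real.log n) atTop atTop :=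
    Real.tendsto_log_atTop.comp tendsto_natCast_atTop_atTop
  have hexponent : Tendsto (fun n : ℕ => Q * (Real.log n / n) + (Real.log A - δ * Real.log n))
      atTop atBot := by
    have hlogdiv : Tendsto (fun n : ℕ => Real.log n / n) atTop (𝓝 0) :=
      (Real.isLittleO_log_id_atTop.tendsto_div_nhds_zero).comp tendsto_natCast_atTop_atTop
    refine (hlogdiv.const_mul Q).add_atBot (tendsto_atBot_add_const_left _ _ ?_)
    exact tendsto_neg_atTop_atBot.comp (hlog.const_mul_atTop hδ)
  refine (Real.tendsto_exp_atBot.comp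
    (tendsto_natCast_atTop_atTop.atTop_mul_atBot₀ hexponent)).congr' ?_
  filter_upwards [eventually_gt_atTop 0] with n hn
  have hn' : (0 : ℝ) < n := by exact_mod_cast hn
  rw [Function.comp_apply, Real.rpow_def_of_pos hn', ← Real.rpow_natCast,
    Real.rpow_def_of_pos hA, ← Real.exp_add]
  congr 1
  field_simp
  ring

lemma div_exp_one_pow_le_factorial (n : ℕ) : ((n : ℝ) / Real.exp 1) ^ n ≤ n ! := by
  have hexp := Real.pow_div_factorial_le_exp (n : ℝ) n.cast_nonneg n
  rw [div_le_iff₀ (by positivity)] at hexp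
  rw [div_pow, ← Real.exp_nat_mul, mul_one, div_le_iff₀ (Real.exp_pos _), mul_comm]
  exact hexp

end Asymptotics

section TorusAsymptotics

open scoped Nat

variable {m : ℕ} {p : Fin m → ℕ} {n : ℕ}

lemma negEulerChar_fin (p : Fin m → ℕ) : negEulerChar p = m - 1 - ∑ i, (1 / p i : ℝ) := by
  rw [negEulerChar, Fintype.card_fin]

lemma index_div_le_numCycles_cosetGenPerm {H : Subgroup (TorusKnotGroup m p)} [H.FiniteIndex]
    {i : Fin m} (hp : 0 < p i) (hz : torusGen m p i ^ p i ∈ H) :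
    (H.index : ℝ) / p i ≤ numCycles (cosetGenPerm H i) :=
  card_div_le_numCycles hp (cosetGenPerm_pow hz)

lemma card_subgroups_torusGen_pow_mem_and_le (hp : ∀ i, 0 < p i) (hn : 0 < n) (j : Fin m) (t : ℝ) :
    (Nat.card {H : Subgroup (TorusKnotGroup m p) // H.index = n ∧ torusGen m p j ^ p j ∈ H ∧
        (n : ℝ) / p j + t ≤ numCycles (cosetGenPerm H j)} : ℝ) ≤
      (4 ^ m) ^ n * (n : ℝ) ^ (1 + (negEulerChar p * n - t)) := by
  have hexponent : negEulerChar p * n - t =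
      (m - 1) * n - ∑ i, ((n : ℝ) / p i + Pi.single (M := fun _ => ℝ) j t i) := by
    rw [Finset.sum_add_distrib, Finset.sum_pi_single', negEulerChar_fin, sub_mul,
      Finset.sum_mul, if_pos (Finset.mem_univ j)]
    simp only [one_div_mul_eq_div, sub_sub]
  rw [hexponent]
  refine le_trans (Nat.cast_le.mpr (card_subgroups_mono hn.ne' ?_))
    (card_subgroups_le_numCycles_le (p := p) j.pos hn _)
  rintro H hindex ⟨hz, hcycles⟩ i
  have : H.FiniteIndex := ⟨hindex.trans_ne hn.ne'⟩
  obtain rfl | hij := eq_or_ne i j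
  · rwa [Pi.single_eq_same]
  · rw [Pi.single_eq_of_ne hij, add_zero, ← hindex]
    exact index_div_le_numCycles_cosetGenPerm (hp i) (torusGen_pow_eq i j ▸ hz)

lemma card_subgroups_torusGen_pow_mem_le (hp : ∀ i, 0 < p i) (hn : 0 < n) (j : Fin m) :
    (Nat.card {H : Subgroup (TorusKnotGroup m p) // H.index = n ∧ torusGen m p j ^ p j ∈ H} : ℝ) ≤
      (4 ^ m) ^ n * (n : ℝ) ^ (1 + negEulerChar p * n) := by
  have hcount := card_subgroups_torusGen_pow_mem_and_le hp hn j 0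
  rw [sub_zero] at hcount
  refine le_trans (Nat.cast_le.mpr (card_subgroups_mono hn.ne' ?_)) hcount
  intro H hindex hz
  have : H.FiniteIndex := ⟨hindex.trans_ne hn.ne'⟩
  refine ⟨hz, ?_⟩
  rw [add_zero, ← hindex]
  exact index_div_le_numCycles_cosetGenPerm (hp j) hz

lemma card_subgroups_torusGen_pow_mem_le_of_le_half (hp : ∀ i, 0 < p i)
    (hχ : 0 < negEulerChar p) (j : Fin m) {N : ℕ} (hN : N ∈ Finset.Icc 1 (n / 2)) :
    (Nat.card {H : Subgroup (TorusKnotGroup m p) // H.index = N ∧ torusGen m p j ^ p j ∈ H} : ℝ) ≤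
      (4 ^ m) ^ n * (n : ℝ) ^ (1 + negEulerChar p / 2 * n) := by
  obtain ⟨hN₁, hN₂⟩ := Finset.mem_Icc.mp hN
  have hNn : N ≤ n := hN₂.trans (Nat.div_le_self n 2)
  have hexponent : negEulerChar p * N ≤ negEulerChar p / 2 * n := by
    have : (N : ℝ) ≤ n / 2 := (Nat.cast_le.mpr hN₂).trans Nat.cast_div_le
    rw [div_mul_comm, mul_comm]
    gcongr
  calc _ ≤ (4 ^ m) ^ N * (N : ℝ) ^ (1 + negEulerChar p * N) :=
        card_subgroups_torusGen_pow_mem_le hp hN₁ j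
    _ ≤ (4 ^ m) ^ n * (n : ℝ) ^ (1 + negEulerChar p * N) := by
        gcongr
        exact one_le_pow₀ (by norm_num)
    _ ≤ (4 ^ m) ^ n * (n : ℝ) ^ (1 + negEulerChar p / 2 * n) := by
        gcongr
        exact_mod_cast hN₁.trans hNn

lemma card_subgroups_torusGen_pow_notMem_le (hp : ∀ i, 0 < p i) (hχ : 0 < negEulerChar p)
    (hn : 0 < n) (j : Fin m) :
    (Nat.card {H : Subgroup (TorusKnotGroup m p) // H.index = n ∧ torusGen m p j ^ p j ∉ H} : ℝ) ≤
      (8 ^ m) ^ n * (n : ℝ) ^ (2 + negEulerChar p / 2 * n) := by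
  have hn' : (n : ℝ) ≠ 0 := by exact_mod_cast hn.ne'
  have hrank : (2 : ℝ) ^ (Group.rank (TorusKnotGroup m p) * n) ≤ (2 ^ m) ^ n := by
    rw [← pow_mul]
    gcongr
    · norm_num
    · exact rank_torusKnotGroup_le m p
  calc (Nat.card {H : Subgroup (TorusKnotGroup m p) //
        H.index = n ∧ torusGen m p j ^ p j ∉ H} : ℝ)
      ≤ 2 ^ (Group.rank (TorusKnotGroup m p) * n) * ∑ N ∈ Finset.Icc 1 (n / 2),
          (Nat.card {K : Subgroup (TorusKnotGroup m p) //
            K.index = N ∧ torusGen m p j ^ p j ∈ K} : ℝ) := by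
        exact_mod_cast card_subgroups_notMem_le (torusGen_pow_mem_center j) hn.ne'
    _ ≤ (2 ^ m) ^ n * (n * ((4 ^ m) ^ n * (n : ℝ) ^ (1 + negEulerChar p / 2 * n))) := by
        gcongr
        refine (Finset.sum_le_card_nsmul _ _ _ fun N hN =>
          card_subgroups_torusGen_pow_mem_le_of_le_half hp hχ j hN).trans ?_
        rw [nsmul_eq_mul, Nat.card_Icc, Nat.add_sub_cancel]
        gcongr
        exact Nat.div_le_self n 2
    _ = (8 ^ m) ^ n * (n : ℝ) ^ (2 + negEulerChar p / 2 * n) := by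
        rw [show (8 : ℝ) = 2 * 4 by norm_num, mul_pow, mul_pow,
          show 2 + negEulerChar p / 2 * n = 1 + negEulerChar p / 2 * n + 1 by ring,
          Real.rpow_add_one hn']
        ring

lemma eventually_le_card_subgroups (hp : ∀ i, 2 ≤ p i) (hχ : 0 < negEulerChar p) :
    ∀ᶠ n : ℕ in atTop, (Real.exp 1 ^ m)⁻¹ ^ n / 2 *
        (n : ℝ) ^ (negEulerChar p * n - ∑ i, (p i : ℝ)) ≤
      Nat.card {H : Subgroup (TorusKnotGroup m p) // H.index = n} := by
  filter_upwards [eventually_le_card_transitiveTuples hp hχ, eventually_gt_atTop 0] with n hlow hn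
  have hn' : (0 : ℝ) < n := by exact_mod_cast hn
  have hcount : (Nat.card {x : Fin m → Equiv.Perm (Fin n) //
      (∀ i, x i ^ p i = 1) ∧ IsTransitiveTuple x} : ℝ) ≤
        Nat.card {H : Subgroup (TorusKnotGroup m p) // H.index = n} * n ! := by
    exact_mod_cast card_transitiveTuples_le_card_subgroups_mul hn
  rw [Fintype.card_fin] at hlow
  refine le_of_mul_le_mul_right ?_ (pow_pos hn' n)
  calc (Real.exp 1 ^ m)⁻¹ ^ n / 2 * (n : ℝ) ^ (negEulerChar p * n - ∑ i, (p i : ℝ)) * (n : ℝ) ^ n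
      = (((n : ℝ) / Real.exp 1) ^ n) ^ m *
          (n : ℝ) ^ (-(n * ∑ i, (1 / p i : ℝ) + ∑ i, (p i : ℝ))) / 2 := by
        have hexponent : (n : ℝ) ^ (negEulerChar p * n - ∑ i, (p i : ℝ)) * (n : ℝ) ^ n =
            ((n : ℝ) ^ n) ^ m * (n : ℝ) ^ (-(n * ∑ i, (1 / p i : ℝ) + ∑ i, (p i : ℝ))) := by
          rw [← pow_mul, ← Real.rpow_natCast, ← Real.rpow_natCast, ← Real.rpow_add hn',
            ← Real.rpow_add hn', negEulerChar_fin]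
          push_cast
          ring_nf
        rw [mul_assoc, hexponent, div_pow, div_pow, inv_pow, pow_right_comm (Real.exp 1)]
        ring
    _ ≤ (n ! : ℝ) ^ m * (n : ℝ) ^ (-(n * ∑ i, (1 / p i : ℝ) + ∑ i, (p i : ℝ))) / 2 := by
        gcongr
        exact div_exp_one_pow_le_factorial n
    _ ≤ Nat.card {H : Subgroup (TorusKnotGroup m p) // H.index = n} * n ! := hlow.trans hcount
    _ ≤ Nat.card {H : Subgroup (TorusKnotGroup m p) // H.index = n} * (n : ℝ) ^ n := by
        gcongr
        exact_mod_cast Nat.factorial_le_pow n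

lemma eventually_card_subgroups_ne_zero (hp : ∀ i, 2 ≤ p i) (hχ : 0 < negEulerChar p) :
    ∀ᶠ n : ℕ in atTop, Nat.card {H : Subgroup (TorusKnotGroup m p) // H.index = n} ≠ 0 := by
  filter_upwards [eventually_le_card_subgroups hp hχ, eventually_gt_atTop 0] with n hlow hn
  have : (0 : ℝ) < n := by exact_mod_cast hn
  exact Nat.cast_ne_zero.mp (hlow.trans_lt' (by positivity)).ne'

lemma tendsto_subgroupProb_zero_of_card_le (hp : ∀ i, 2 ≤ p i) (hχ : 0 < negEulerChar p)
    {P : ℕ → Subgroup (TorusKnotGroup m p) → Prop} {A Q δ : ℝ} (hA : 0 < A) (hδ : 0 < δ)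
    (hP : ∀ n : ℕ, 0 < n → (Nat.card {H : Subgroup (TorusKnotGroup m p) // H.index = n ∧ P n H} : ℝ)
      ≤ A ^ n * (n : ℝ) ^ (Q + (negEulerChar p - δ) * n)) :
    Tendsto (fun n => subgroupProb (TorusKnotGroup m p) n (P n)) atTop (𝓝 0) := by
  have hlim := (tendsto_pow_mul_rpow_sub_zero (Q + ∑ i, (p i : ℝ))
    (by positivity : 0 < A * Real.exp 1 ^ m) hδ).const_mul 2
  rw [mul_zero] at hlim
  refine tendsto_of_tendsto_of_tendsto_of_le_of_le' tendsto_const_nhds hlim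
    (Eventually.of_forall fun n => by unfold subgroupProb; positivity) ?_
  filter_upwards [eventually_le_card_subgroups hp hχ, eventually_gt_atTop 0] with n hlow hn
  have hn' : (0 : ℝ) < n := by exact_mod_cast hn
  refine div_le_of_le_mul₀ (Nat.cast_nonneg _) (by positivity) ((hP n hn).trans ?_)
  refine le_trans (le_of_eq ?_) (mul_le_mul_of_nonneg_left hlow (by positivity))
  have hexponent : (n : ℝ) ^ (Q + (negEulerChar p - δ) * n) =
      (n : ℝ) ^ (Q + ∑ i, (p i : ℝ) - δ * n) *
        (n : ℝ) ^ (negEulerChar p * n - ∑ i, (p i : ℝ)) := by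
    rw [← Real.rpow_add hn']
    ring_nf
  rw [hexponent, mul_pow, inv_pow]
  field_simp

lemma tendsto_subgroupProb_torusGen_pow_notMem (hp : ∀ i, 2 ≤ p i) (hχ : 0 < negEulerChar p)
    (j : Fin m) :
    Tendsto (fun n => subgroupProb (TorusKnotGroup m p) n fun H => torusGen m p j ^ p j ∉ H)
      atTop (𝓝 0) := by
  refine tendsto_subgroupProb_zero_of_card_le (A := 8 ^ m) (Q := 2) hp hχ (by positivity)
    (half_pos hχ) fun n hn => ?_
  rw [sub_half]
  exact card_subgroups_torusGen_pow_notMem_le (fun i => two_pos.trans_le (hp i)) hχ hn j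

lemma tendsto_subgroupProb_torusGen_pow_mem_and (hp : ∀ i, 2 ≤ p i) (hχ : 0 < negEulerChar p)
    (j : Fin m) {δ : ℝ} (hδ : 0 < δ) :
    Tendsto (fun n : ℕ => subgroupProb (TorusKnotGroup m p) n fun H =>
        torusGen m p j ^ p j ∈ H ∧ (n : ℝ) / p j + δ * n ≤ numCycles (cosetGenPerm H j))
      atTop (𝓝 0) := by
  refine tendsto_subgroupProb_zero_of_card_le (A := 4 ^ m) (Q := 1) hp hχ (by positivity) hδ
    fun n hn => ?_
  rw [sub_mul]
  exact card_subgroups_torusGen_pow_mem_and_le (fun i => two_pos.trans_le (hp i)) hn j (δ * n)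

/-- The generator `x_i` acts on the cosets of `H` with order dividing `p_i`, and its number of
cycles exceeds the least possible value `index / p_i` by less than `δ * index`. -/
def IsNearlySemiregular (δ : ℝ) (H : Subgroup (TorusKnotGroup m p)) (i : Fin m) : Prop :=
  torusGen m p i ^ p i ∈ H ∧ (numCycles (cosetGenPerm H i) : ℝ) < H.index / p i + δ * H.index

lemma tendsto_subgroupProb_not_isNearlySemiregular (hp : ∀ i, 2 ≤ p i)
    (hχ : 0 < negEulerChar p) (i : Fin m) {δ : ℝ} (hδ : 0 < δ) :
    Tendsto (fun n => subgroupProb (TorusKnotGroup m p) n fun H => ¬ IsNearlySemiregular δ H i)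
      atTop (𝓝 0) := by
  have hlim := (tendsto_subgroupProb_torusGen_pow_notMem hp hχ i).add
    (tendsto_subgroupProb_torusGen_pow_mem_and hp hχ i hδ)
  rw [add_zero] at hlim
  refine tendsto_of_tendsto_of_tendsto_of_le_of_le' tendsto_const_nhds hlim
    (Eventually.of_forall fun n => by unfold subgroupProb; positivity) ?_
  filter_upwards [eventually_ne_atTop 0] with n hn
  refine (subgroupProb_mono hn ?_).trans (subgroupProb_or_le hn)
  rintro H rfl hH
  by_contra! hcontra
  exact hH ⟨hcontra.1, hcontra.2 hcontra.1⟩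

lemma tendsto_subgroupProb_forall_isNearlySemiregular (hp : ∀ i, 2 ≤ p i)
    (hχ : 0 < negEulerChar p) {δ : ℝ} (hδ : 0 < δ) :
    Tendsto (fun n => subgroupProb (TorusKnotGroup m p) n fun H => ∀ i, IsNearlySemiregular δ H i)
      atTop (𝓝 1) := by
  have hlim := (tendsto_finsetSum Finset.univ fun i _ =>
    tendsto_subgroupProb_not_isNearlySemiregular hp hχ i hδ).const_sub 1
  rw [Finset.sum_const_zero, sub_zero] at hlim
  refine tendsto_of_tendsto_of_tendsto_of_le_of_le' hlim tendsto_const_nhds ?_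
    ((eventually_ne_atTop 0).mono fun n hn => subgroupProb_le_one hn)
  filter_upwards [eventually_card_subgroups_ne_zero hp hχ, eventually_ne_atTop 0] with n hne hn
  rw [sub_le_comm, ← subgroupProb_not hn hne]
  exact subgroupProb_le_sum hn fun H _ hH => not_forall.mp hH

lemma abs_betti1_div_index_sub_negEulerChar_lt (hm : 0 < m) (hp : ∀ i, 0 < p i) {ε : ℝ}
    {H : Subgroup (TorusKnotGroup m p)} (hε : 2 < ε * H.index)
    (hH : ∀ i, IsNearlySemiregular (ε / (2 * m)) H i) :
    |(betti1 H : ℝ) / H.index - negEulerChar p| < ε := by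
  have hindex : H.index ≠ 0 := by
    rintro h
    rw [h, Nat.cast_zero, mul_zero] at hε
    linarith
  have : H.FiniteIndex := ⟨hindex⟩
  obtain ⟨hlow, hupp⟩ := betti1_add_index_add_sum_numCycles_mem_Icc hm hp fun i => (hH i).1
  set n := H.index
  have hn : (0 : ℝ) < n := by exact_mod_cast Nat.pos_of_ne_zero hindex
  have hcycles_ge : ∑ i, (n : ℝ) / p i ≤ ∑ i, (numCycles (cosetGenPerm H i) : ℝ) :=
    Finset.sum_le_sum fun i _ => index_div_le_numCycles_cosetGenPerm (hp i) (hH i).1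
  have hcycles_le : ∑ i, (numCycles (cosetGenPerm H i) : ℝ) ≤
      ∑ i, (n : ℝ) / p i + ε / 2 * n := by
    calc _ ≤ ∑ i, ((n : ℝ) / p i + ε / (2 * m) * n) := Finset.sum_le_sum fun i _ => (hH i).2.le
      _ = _ := by
        have : (0 : ℝ) < m := by exact_mod_cast hm
        rw [Finset.sum_add_distrib, Finset.sum_const, Finset.card_fin, nsmul_eq_mul]
        field_simp
  have hsum : ∑ i, (n : ℝ) / p i = n * ∑ i, (1 / p i : ℝ) := by
    simp only [Finset.mul_sum, mul_one_div]
  have hlow' : (m : ℝ) * n + 1 ≤ betti1 H + n + ∑ i, (numCycles (cosetGenPerm H i) : ℝ) := by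
    exact_mod_cast hlow
  have hupp' : betti1 H + n + ∑ i, (numCycles (cosetGenPerm H i) : ℝ) ≤ (m : ℝ) * n + 2 := by
    exact_mod_cast hupp
  rw [div_sub' hn.ne', abs_div, abs_of_pos hn, div_lt_iff₀ hn, abs_lt, negEulerChar_fin]
  constructor <;> linarith

end TorusAsymptotics

theorem betti_number_growth (m : ℕ) (p : Fin m → ℕ) (hp : ∀ i, 2 ≤ p i)
    (h : ∑ i, (1 : ℝ) / (p i : ℝ) < (m : ℝ) - 1) (ε : ℝ) (hε : 0 < ε) :
    Filter.Tendsto (fun n : ℕ =>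
      subgroupProb (TorusKnotGroup m p) n (fun H =>
        |(betti1 H : ℝ) / (n : ℝ) - ((m : ℝ) - 1 - ∑ i, (1 : ℝ) / (p i : ℝ))| < ε))
      Filter.atTop (𝓝 1) := by
  have hχ : 0 < negEulerChar p := by rw [negEulerChar_fin]; linarith
  have hm : 0 < m := by
    have hsum : 0 ≤ ∑ i, (1 : ℝ) / (p i : ℝ) := Finset.sum_nonneg fun i _ => by positivity
    exact_mod_cast (by linarith : (0 : ℝ) < m)
  have hlarge : ∀ᶠ n : ℕ in atTop, 2 < ε * n :=
    (tendsto_natCast_atTop_atTop.const_mul_atTop hε).eventually_gt_atTop 2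
  simp only [← negEulerChar_fin]
  refine tendsto_of_tendsto_of_tendsto_of_le_of_le'
    (tendsto_subgroupProb_forall_isNearlySemiregular hp hχ (by positivity : 0 < ε / (2 * m)))
    tendsto_const_nhds ?_ ((eventually_ne_atTop 0).mono fun n hn => subgroupProb_le_one hn)
  filter_upwards [hlarge, eventually_ne_atTop 0] with n hnε hn
  refine subgroupProb_mono hn ?_
  rintro H rfl hH
  exact abs_betti1_div_index_sub_negEulerChar_lt hm (fun i => two_pos.trans_le (hp i)) hnε hH
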